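/- If t ∈ (0,1) is irrational, then the Hausdorff dimension of C_t equals 1. -/

import Mathlib

open Filter Topology

/-- The digit set `Ω_t = {0, 3t, 3, 3t+3}`. -/
def Omega (t : ℝ) : Set ℝ := {0, 3*t, 3, 3*t+3}

/-- The projection `C_t` of the four corner Cantor set:
the set of sums `∑_{i≥1} d_i 4^{-i}` with all digits `d_i ∈ Ω_t`. -/
noncomputable def cornerC (t : ℝ) : Set ℝ :=
  {x | ∃ d : ℕ → ℝ, (∀ i, d i ∈ Omega t) ∧ x = ∑' i : ℕ, d i / 4^(i+1)}

/-!
The argument is of Hochman type. Let `E n` be the energy of the natural measure of level `n`, that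
is, the squared `L²` norm at the scale of the level-`n` cylinders. Energies are submultiplicative up
to a constant, hence `E n = exp (-(b + o(1)) n)` for some exponent `b ≤ log 4`.

Suppose that `b < log 4`. Convolution with the uniform measure `ρ` on a large separated set then
lowers the energy by an exponential factor. Indeed such a set is mostly a union of branching sets,
and a high convolution power of the uniform measure on a branching set looks, at each scale of
branching, like a sum of many independent Bernoulli variables, which is spread out by the theorems
of Littlewood–Offord and Chebyshev. Since `k ↦ ‖ρ ^ k * μ‖` is log-convex, a gain for a high power
gives a gain for `ρ` itself. On the other hand `t` is irrational, so for infinitely many `n` the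
`4 ^ n` points of level `n` are `4 ^ (-3 n)`-separated. Taking them for the separated set, the
energy of a level comparable to `n` falls below the value dictated by the exponent `b`.

So `b = log 4`. By Cauchy–Schwarz there are `4 ^ (n (1 - o(1)))` separated cylinders of level `n`;
iterating them gives subsets of `cornerC t` which a Hölder map of exponent close to `1` sends onto
`[0, 1]`.
-/

namespace CornerCantor

open MeasureTheory Finset

/-! ### Finitely supported measures and their `L²` norm at unit scale -/

/-- Finitely supported signed measures on `ℝ`; the product is convolution. -/
abbrev FinMeasure := AddMonoidAlgebra ℝ ℝ

/-- The unit point mass at `x`. -/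
noncomputable def dirac (x : ℝ) : FinMeasure := AddMonoidAlgebra.single x 1

lemma dirac_mul_dirac (x y : ℝ) : dirac x * dirac y = dirac (x + y) := by
  simp [dirac, AddMonoidAlgebra.single_mul_single]

lemma dirac_zero : dirac 0 = 1 := rfl

lemma FinMeasure.dirac_induction {P : FinMeasure → Prop} (μ : FinMeasure)
    (dirac : ∀ x, P (dirac x)) (add : ∀ μ ν, P μ → P ν → P (μ + ν))
    (smul : ∀ (c : ℝ) μ, P μ → P (c • μ)) : P μ := by
  induction μ using AddMonoidAlgebra.induction_on with
  | of m => exact dirac _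
  | add f g hf hg => exact add _ _ hf hg
  | smul r f hf => exact smul _ _ hf

/-- The triangular bump, the autocorrelation of the indicator of a unit interval. -/
noncomputable def tent (x : ℝ) : ℝ := max 0 (1 - |x|)

lemma tent_nonneg (x : ℝ) : 0 ≤ tent x := le_max_left _ _

lemma one_sub_abs_le_tent (x : ℝ) : 1 - |x| ≤ tent x := le_max_right _ _

lemma tent_eq_zero {x : ℝ} (hx : 1 ≤ |x|) : tent x = 0 := max_eq_left (by linarith)

/-- The indicator of `[x, x + 1)` as an element of `L²(ℝ)`. -/
noncomputable def boxLp (x : ℝ) : Lp ℝ 2 (volume : Measure ℝ) :=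
  indicatorConstLp 2 (measurableSet_Ico (a := x) (b := x + 1)) (by simp) (1 : ℝ)

lemma inner_boxLp (x y : ℝ) : inner ℝ (boxLp x) (boxLp y) = tent (x - y) := by
  have overlap : min (x + 1) (y + 1) - max x y = 1 - |x - y| := by
    rw [min_add_add_right, ← max_sub_min_eq_abs']
    ring
  rw [boxLp, boxLp, L2.inner_indicatorConstLp_indicatorConstLp (hμs := by simp) (hμt := by simp),
    Set.Ico_inter_Ico, Real.volume_real_Ico, overlap, tent, max_comm]
  simp

/-- Convolution of a finitely supported measure with the indicator of `[0, 1)`. -/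
noncomputable def smooth : FinMeasure →ₗ[ℝ] Lp ℝ 2 (volume : Measure ℝ) where
  toFun μ := Finsupp.linearCombination ℝ boxLp μ.coeff
  map_add' μ ν := by simp
  map_smul' c μ := by simp

lemma smooth_dirac (x : ℝ) : smooth (dirac x) = boxLp x := by
  simp [smooth, dirac]

lemma inner_smooth_dirac (x y : ℝ) :
    inner ℝ (smooth (dirac x)) (smooth (dirac y)) = tent (x - y) := by
  rw [smooth_dirac, smooth_dirac, inner_boxLp]

/-- The `L²` norm of `μ` smoothed at unit scale. -/
noncomputable def smoothNorm (μ : FinMeasure) : ℝ := ‖smooth μ‖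

lemma smoothNorm_nonneg (μ : FinMeasure) : 0 ≤ smoothNorm μ := norm_nonneg _

lemma smoothNorm_sq (μ : FinMeasure) : smoothNorm μ ^ 2 = inner ℝ (smooth μ) (smooth μ) :=
  (real_inner_self_eq_norm_sq _).symm

lemma smoothNorm_eq_of_sq_eq {μ ν : FinMeasure} (h : smoothNorm μ ^ 2 = smoothNorm ν ^ 2) :
    smoothNorm μ = smoothNorm ν :=
  (pow_left_inj₀ (smoothNorm_nonneg _) (smoothNorm_nonneg _) two_ne_zero).1 h

lemma inner_smooth_le (μ ν : FinMeasure) :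
    inner ℝ (smooth μ) (smooth ν) ≤ smoothNorm μ * smoothNorm ν :=
  real_inner_le_norm _ _

lemma smoothNorm_add_le (μ ν : FinMeasure) :
    smoothNorm (μ + ν) ≤ smoothNorm μ + smoothNorm ν := by
  simpa only [smoothNorm, map_add] using norm_add_le (smooth μ) (smooth ν)

lemma smoothNorm_add_sq_le (μ ν : FinMeasure) :
    smoothNorm (μ + ν) ^ 2 ≤ 2 * smoothNorm μ ^ 2 + 2 * smoothNorm ν ^ 2 :=
  calc smoothNorm (μ + ν) ^ 2
      ≤ (smoothNorm μ + smoothNorm ν) ^ 2 :=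
        pow_le_pow_left₀ (smoothNorm_nonneg _) (smoothNorm_add_le μ ν) 2
    _ ≤ 2 * smoothNorm μ ^ 2 + 2 * smoothNorm ν ^ 2 := by
        linarith [add_sq_le (a := smoothNorm μ) (b := smoothNorm ν)]

lemma smoothNorm_smul {c : ℝ} (hc : 0 ≤ c) (μ : FinMeasure) :
    smoothNorm (c • μ) = c * smoothNorm μ := by
  rw [smoothNorm, map_smul, norm_smul, Real.norm_of_nonneg hc, smoothNorm]

lemma smoothNorm_sum_le {ι : Type*} (s : Finset ι) (μ : ι → FinMeasure) :
    smoothNorm (∑ i ∈ s, μ i) ≤ ∑ i ∈ s, smoothNorm (μ i) := by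
  simpa only [smoothNorm, map_sum] using norm_sum_le s fun i => smooth (μ i)

lemma smoothNorm_one : smoothNorm 1 = 1 := by
  have hsq : smoothNorm 1 ^ 2 = 1 := by
    rw [smoothNorm_sq, ← dirac_zero, inner_smooth_dirac]
    simp [tent]
  exact (pow_eq_one_iff_of_nonneg (smoothNorm_nonneg 1) two_ne_zero).1 hsq

lemma inner_smooth_dirac_mul (x : ℝ) (μ ν : FinMeasure) :
    inner ℝ (smooth (dirac x * μ)) (smooth ν) = inner ℝ (smooth μ) (smooth (dirac (-x) * ν)) := by
  induction μ using FinMeasure.dirac_induction with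
  | dirac y =>
    induction ν using FinMeasure.dirac_induction with
    | dirac z => simp only [dirac_mul_dirac, inner_smooth_dirac]; congr 1; ring
    | add ν₁ ν₂ h₁ h₂ => simp only [mul_add, map_add, inner_add_right, h₁, h₂]
    | smul c ν h => simp only [mul_smul_comm, map_smul, inner_smul_right, h]
  | add μ₁ μ₂ h₁ h₂ => simp only [mul_add, map_add, inner_add_left, h₁, h₂]
  | smul c μ h => simp only [mul_smul_comm, map_smul, inner_smul_left, h]

lemma smoothNorm_dirac_mul (x : ℝ) (μ : FinMeasure) :
    smoothNorm (dirac x * μ) = smoothNorm μ := by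
  refine smoothNorm_eq_of_sq_eq ?_
  rw [smoothNorm_sq, smoothNorm_sq, inner_smooth_dirac_mul, ← mul_assoc, dirac_mul_dirac,
    neg_add_cancel, dirac_zero, one_mul]

lemma smoothNorm_mul_sum_smul_dirac_le {ι : Type*} {s : Finset ι} {w : ι → ℝ}
    (hw : ∀ i ∈ s, 0 ≤ w i) (p : ι → ℝ) (μ : FinMeasure) :
    smoothNorm (μ * ∑ i ∈ s, w i • dirac (p i)) ≤ (∑ i ∈ s, w i) * smoothNorm μ := by
  rw [mul_sum, sum_mul]
  refine (smoothNorm_sum_le _ _).trans (sum_le_sum fun i hi => ?_)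
  rw [mul_smul_comm, smoothNorm_smul (hw i hi), mul_comm μ, smoothNorm_dirac_mul]

/-! ### Log-convexity of the norms of convolution powers -/

lemma exists_smooth_adjoint (ρ : FinMeasure) : ∃ ρ' : FinMeasure, ∀ μ ν : FinMeasure,
    inner ℝ (smooth (ρ * μ)) (smooth ν) = inner ℝ (smooth μ) (smooth (ρ' * ν)) := by
  induction ρ using FinMeasure.dirac_induction with
  | dirac x => exact ⟨dirac (-x), inner_smooth_dirac_mul x⟩
  | add ρ₁ ρ₂ h₁ h₂ =>
    obtain ⟨ρ₁', h₁⟩ := h₁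
    obtain ⟨ρ₂', h₂⟩ := h₂
    refine ⟨ρ₁' + ρ₂', fun μ ν => ?_⟩
    simp only [add_mul, map_add, inner_add_left, inner_add_right, h₁, h₂]
  | smul c ρ h =>
    obtain ⟨ρ', h⟩ := h
    refine ⟨c • ρ', fun μ ν => ?_⟩
    simp only [smul_mul_assoc, map_smul, inner_smul_left, inner_smul_right, h, conj_trivial]

-- Convolution by `ρ` is a normal operator: `ρ` and its adjoint commute.
lemma smoothNorm_pow_succ_mul_sq_le (μ ρ : FinMeasure) (j : ℕ) :
    smoothNorm (ρ ^ (j + 1) * μ) ^ 2 ≤ smoothNorm (ρ ^ j * μ) * smoothNorm (ρ ^ (j + 2) * μ) := by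
  obtain ⟨ρ', adjoint⟩ := exists_smooth_adjoint ρ
  have norm_adjoint (ν : FinMeasure) : smoothNorm (ρ' * ν) = smoothNorm (ρ * ν) := by
    refine smoothNorm_eq_of_sq_eq ?_
    rw [smoothNorm_sq, smoothNorm_sq, ← adjoint (ρ' * ν) ν, adjoint ν (ρ * ν), real_inner_comm,
      mul_left_comm]
  calc smoothNorm (ρ ^ (j + 1) * μ) ^ 2
      = inner ℝ (smooth (ρ ^ j * μ)) (smooth (ρ' * (ρ ^ (j + 1) * μ))) := by
        rw [smoothNorm_sq, ← adjoint, ← mul_assoc, ← pow_succ']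
    _ ≤ smoothNorm (ρ ^ j * μ) * smoothNorm (ρ' * (ρ ^ (j + 1) * μ)) := inner_smooth_le _ _
    _ = smoothNorm (ρ ^ j * μ) * smoothNorm (ρ ^ (j + 2) * μ) := by
        rw [norm_adjoint, ← mul_assoc, ← pow_succ']

lemma smoothNorm_mul_mul_smoothNorm_pow_le (μ ρ : FinMeasure) (j : ℕ) :
    smoothNorm (ρ * μ) * smoothNorm (ρ ^ j * μ) ≤ smoothNorm μ * smoothNorm (ρ ^ (j + 1) * μ) := by
  induction j with
  | zero => simp [mul_comm]
  | succ j ih =>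
    have log_convex := smoothNorm_pow_succ_mul_sq_le μ ρ j
    rcases (smoothNorm_nonneg (ρ ^ j * μ)).eq_or_lt with hzero | hpos
    · have : smoothNorm (ρ ^ (j + 1) * μ) = 0 := by
        rw [← hzero, zero_mul] at log_convex
        exact pow_eq_zero_iff two_ne_zero |>.1 (log_convex.antisymm (sq_nonneg _))
      rw [this, mul_zero]
      exact mul_nonneg (smoothNorm_nonneg _) (smoothNorm_nonneg _)
    · refine le_of_mul_le_mul_left ?_ hpos
      calc smoothNorm (ρ ^ j * μ) * (smoothNorm (ρ * μ) * smoothNorm (ρ ^ (j + 1) * μ))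
          = smoothNorm (ρ * μ) * smoothNorm (ρ ^ j * μ) * smoothNorm (ρ ^ (j + 1) * μ) := by ring
        _ ≤ smoothNorm μ * smoothNorm (ρ ^ (j + 1) * μ) * smoothNorm (ρ ^ (j + 1) * μ) :=
            mul_le_mul_of_nonneg_right ih (smoothNorm_nonneg _)
        _ = smoothNorm μ * smoothNorm (ρ ^ (j + 1) * μ) ^ 2 := by ring
        _ ≤ smoothNorm μ * (smoothNorm (ρ ^ j * μ) * smoothNorm (ρ ^ (j + 2) * μ)) :=
            mul_le_mul_of_nonneg_left log_convex (smoothNorm_nonneg _)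
        _ = smoothNorm (ρ ^ j * μ) * (smoothNorm μ * smoothNorm (ρ ^ (j + 2) * μ)) := by ring

lemma smoothNorm_mul_pow_le (μ ρ : FinMeasure) (k : ℕ) :
    smoothNorm (ρ * μ) ^ (k + 1) ≤ smoothNorm μ ^ k * smoothNorm (ρ ^ (k + 1) * μ) := by
  induction k with
  | zero => simp
  | succ k ih =>
    calc smoothNorm (ρ * μ) ^ (k + 2) = smoothNorm (ρ * μ) * smoothNorm (ρ * μ) ^ (k + 1) := by ring
      _ ≤ smoothNorm (ρ * μ) * (smoothNorm μ ^ k * smoothNorm (ρ ^ (k + 1) * μ)) :=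
          mul_le_mul_of_nonneg_left ih (smoothNorm_nonneg _)
      _ = smoothNorm μ ^ k * (smoothNorm (ρ * μ) * smoothNorm (ρ ^ (k + 1) * μ)) := by ring
      _ ≤ smoothNorm μ ^ k * (smoothNorm μ * smoothNorm (ρ ^ (k + 2) * μ)) :=
          mul_le_mul_of_nonneg_left (smoothNorm_mul_mul_smoothNorm_pow_le μ ρ (k + 1))
            (pow_nonneg (smoothNorm_nonneg _) _)
      _ = smoothNorm μ ^ (k + 1) * smoothNorm (ρ ^ (k + 2) * μ) := by ring

/-! ### Supports -/

/-- The measures whose atoms all lie in `I`. -/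
noncomputable def supportedIn (I : Set ℝ) : Submodule ℝ FinMeasure :=
  Submodule.span ℝ (dirac '' I)

lemma dirac_mem_supportedIn {I : Set ℝ} {x : ℝ} (hx : x ∈ I) : dirac x ∈ supportedIn I :=
  Submodule.subset_span ⟨x, hx, rfl⟩

lemma supportedIn_mono {I J : Set ℝ} (h : I ⊆ J) : supportedIn I ≤ supportedIn J :=
  Submodule.span_mono (Set.image_mono h)

lemma mul_mem_supportedIn_Icc {a b c d : ℝ} {μ ν : FinMeasure}
    (hμ : μ ∈ supportedIn (Set.Icc a b)) (hν : ν ∈ supportedIn (Set.Icc c d)) :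
    μ * ν ∈ supportedIn (Set.Icc (a + c) (b + d)) := by
  have h := Submodule.mul_mem_mul hμ hν
  rw [supportedIn, supportedIn, Submodule.span_mul_span] at h
  refine Submodule.span_mono ?_ h
  rintro _ ⟨_, ⟨x, hx, rfl⟩, _, ⟨y, hy, rfl⟩, rfl⟩
  exact ⟨x + y, ⟨add_le_add hx.1 hy.1, add_le_add hx.2 hy.2⟩, (dirac_mul_dirac x y).symm⟩

lemma dirac_mul_mem_supportedIn_Icc {a b : ℝ} {μ : FinMeasure} (x : ℝ)
    (hμ : μ ∈ supportedIn (Set.Icc a b)) :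
    dirac x * μ ∈ supportedIn (Set.Icc (x + a) (x + b)) :=
  mul_mem_supportedIn_Icc (dirac_mem_supportedIn ⟨le_rfl, le_rfl⟩) hμ

lemma prod_mem_supportedIn_Icc {ι : Type*} (s : Finset ι) {μ : ι → FinMeasure} {a b : ι → ℝ}
    (h : ∀ i ∈ s, μ i ∈ supportedIn (Set.Icc (a i) (b i))) :
    ∏ i ∈ s, μ i ∈ supportedIn (Set.Icc (∑ i ∈ s, a i) (∑ i ∈ s, b i)) := by
  classical
  induction s using Finset.induction_on with
  | empty =>
    rw [prod_empty, sum_empty, sum_empty, ← dirac_zero]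
    exact dirac_mem_supportedIn ⟨le_rfl, le_rfl⟩
  | insert i s hi ih =>
    rw [prod_insert hi, sum_insert hi, sum_insert hi]
    exact mul_mem_supportedIn_Icc (h i (mem_insert_self i s))
      (ih fun j hj => h j (mem_insert_of_mem hj))

lemma inner_smooth_eq_zero_of_far {I J : Set ℝ} (hIJ : ∀ x ∈ I, ∀ y ∈ J, 1 ≤ |x - y|)
    {μ ν : FinMeasure} (hμ : μ ∈ supportedIn I) (hν : ν ∈ supportedIn J) :
    inner ℝ (smooth μ) (smooth ν) = 0 := by
  induction hμ using Submodule.span_induction with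
  | mem _ h =>
    obtain ⟨x, hx, rfl⟩ := h
    induction hν using Submodule.span_induction with
    | mem _ h =>
      obtain ⟨y, hy, rfl⟩ := h
      rw [inner_smooth_dirac, tent_eq_zero (hIJ x hx y hy)]
    | zero => simp
    | add ν₁ ν₂ _ _ h₁ h₂ => simp [inner_add_right, h₁, h₂]
    | smul c ν _ h => simp [inner_smul_right, h]
  | zero => simp
  | add μ₁ μ₂ _ _ h₁ h₂ => simp [inner_add_left, h₁, h₂]
  | smul c μ _ h => simp [inner_smul_left, h]

/-! ### Collisions between the atoms of a measure -/

section Collision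

variable {ι : Type*} {s : Finset ι} {w : ι → ℝ}

/-- The mass of the pairs of atoms at distance less than `r`, for the measure with atoms of weight
`w i` at the points `p i`. -/
noncomputable def collision (s : Finset ι) (w p : ι → ℝ) (r : ℝ) : ℝ :=
  ∑ i ∈ s, ∑ j ∈ s, if |p i - p j| < r then w i * w j else 0

lemma collision_mono (hw : ∀ i ∈ s, 0 ≤ w i) (p : ι → ℝ) {r r' : ℝ} (h : r ≤ r') :
    collision s w p r ≤ collision s w p r' := by
  refine sum_le_sum fun i hi => sum_le_sum fun j hj => ?_
  have := mul_nonneg (hw i hi) (hw j hj)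
  split_ifs <;> linarith

lemma collision_le_of_concentration (hw : ∀ i ∈ s, 0 ≤ w i) {p : ι → ℝ} {r c : ℝ}
    (hc : ∀ i ∈ s, (∑ j ∈ s, if |p i - p j| < r then w j else 0) ≤ c) :
    collision s w p r ≤ (∑ i ∈ s, w i) * c := by
  rw [collision, sum_mul]
  refine sum_le_sum fun i hi => ?_
  calc ∑ j ∈ s, (if |p i - p j| < r then w i * w j else 0)
      = w i * ∑ j ∈ s, (if |p i - p j| < r then w j else 0) := by
        simp only [mul_sum, mul_ite, mul_zero]
    _ ≤ w i * c := mul_le_mul_of_nonneg_left (hc i hi) (hw i hi)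

lemma collision_le_card_mul_sum_sq {p : ι → ℝ} {r : ℝ} {N : ℕ}
    (hN : ∀ i ∈ s, #{j ∈ s | |p i - p j| < r} ≤ N) :
    collision s w p r ≤ N * ∑ i ∈ s, w i ^ 2 := by
  have hrow : ∑ i ∈ s, ∑ j ∈ s, (if |p i - p j| < r then w i ^ 2 else 0) ≤
      N * ∑ i ∈ s, w i ^ 2 := by
    rw [mul_sum]
    refine sum_le_sum fun i hi => ?_
    rw [← sum_filter, sum_const, nsmul_eq_mul]
    gcongr
    exact hN i hi
  have hcolumn : ∑ i ∈ s, ∑ j ∈ s, (if |p i - p j| < r then w j ^ 2 else 0) ≤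
      N * ∑ i ∈ s, w i ^ 2 := by
    rw [sum_comm]
    simpa only [abs_sub_comm] using hrow
  have hpair : 2 * collision s w p r ≤
      ∑ i ∈ s, ∑ j ∈ s, (if |p i - p j| < r then w i ^ 2 else 0) +
        ∑ i ∈ s, ∑ j ∈ s, (if |p i - p j| < r then w j ^ 2 else 0) := by
    simp only [collision, mul_sum, ← sum_add_distrib]
    refine sum_le_sum fun i _ => sum_le_sum fun j _ => ?_
    split_ifs
    · linarith [two_mul_le_add_sq (w i) (w j)]
    · simp
  linarith

lemma one_le_abs_sub_of_mem_Icc {a b W x y : ℝ} (hW : 1 ≤ W) (hab : 3 * W ≤ |a - b|)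
    (hx : x ∈ Set.Icc a (a + 2 * W)) (hy : y ∈ Set.Icc b (b + 2 * W)) : 1 ≤ |x - y| := by
  rcases le_abs.1 hab with h | h
  · exact le_abs.2 (Or.inl (by linarith [hx.1, hy.2]))
  · exact le_abs.2 (Or.inr (by linarith [hx.2, hy.1]))

lemma smoothNorm_sum_sq_le_collision {p : ι → ℝ} {μ : ι → FinMeasure} {W : ℝ} (hW : 1 ≤ W)
    (hμ : ∀ i ∈ s, μ i ∈ supportedIn (Set.Icc (p i) (p i + 2 * W))) :
    smoothNorm (∑ i ∈ s, μ i) ^ 2 ≤ collision s (fun i => smoothNorm (μ i)) p (3 * W) := by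
  rw [smoothNorm_sq, map_sum, sum_inner, collision]
  refine sum_le_sum fun i hi => ?_
  rw [inner_sum]
  refine sum_le_sum fun j hj => ?_
  split_ifs with hnear
  · exact inner_smooth_le _ _
  · exact (inner_smooth_eq_zero_of_far (fun x hx y hy => one_le_abs_sub_of_mem_Icc hW
      (not_lt.1 hnear) hx hy) (hμ i hi) (hμ j hj)).le

lemma smoothNorm_sum_smul_sq_le_collision (hw : ∀ i ∈ s, 0 ≤ w i) {p : ι → ℝ}
    {μ : ι → FinMeasure} {W B : ℝ} (hW : 1 ≤ W)
    (hμ : ∀ i ∈ s, μ i ∈ supportedIn (Set.Icc (p i) (p i + 2 * W)))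
    (hB : ∀ i ∈ s, smoothNorm (μ i) ≤ B) :
    smoothNorm (∑ i ∈ s, w i • μ i) ^ 2 ≤ B ^ 2 * collision s w p (3 * W) := by
  have hnorm : ∀ i ∈ s, smoothNorm (w i • μ i) ≤ w i * B := fun i hi =>
    (smoothNorm_smul (hw i hi) _).trans_le (mul_le_mul_of_nonneg_left (hB i hi) (hw i hi))
  refine (smoothNorm_sum_sq_le_collision hW fun i hi => Submodule.smul_mem _ _ (hμ i hi)).trans ?_
  rw [collision, collision, mul_sum]
  refine sum_le_sum fun i hi => ?_
  rw [mul_sum]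
  refine sum_le_sum fun j hj => ?_
  split_ifs
  · calc smoothNorm (w i • μ i) * smoothNorm (w j • μ j)
        ≤ w i * B * (w j * B) := mul_le_mul (hnorm i hi) (hnorm j hj) (smoothNorm_nonneg _)
          ((smoothNorm_nonneg _).trans (hnorm i hi))
      _ = B ^ 2 * (w i * w j) := by ring
  · rw [mul_zero]

lemma one_le_sum_tent_sub {x : ℝ} (hx : |x| < 4) :
    1 ≤ ∑ v ∈ Finset.Icc (-4 : ℤ) 4, tent (x - v) := by
  obtain ⟨hx_gt, hx_lt⟩ := abs_lt.1 hx
  have hfloor := Int.floor_le x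
  have hlt_floor := Int.lt_floor_add_one x
  have hfloor_mem : -4 ≤ ⌊x⌋ ∧ ⌊x⌋ < 4 :=
    ⟨Int.le_floor.2 (by push_cast; linarith), Int.floor_lt.2 (by push_cast; exact hx_lt)⟩
  have hsub : ({⌊x⌋, ⌊x⌋ + 1} : Finset ℤ) ⊆ Finset.Icc (-4 : ℤ) 4 := by
    intro y hy
    simp only [mem_insert, mem_singleton, Finset.mem_Icc] at hy ⊢
    omega
  refine le_trans ?_ (sum_le_sum_of_subset_of_nonneg hsub fun _ _ _ => tent_nonneg _)
  rw [sum_pair (by omega)]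
  have hleft := one_sub_abs_le_tent (x - ⌊x⌋)
  have hright := one_sub_abs_le_tent (x - (⌊x⌋ + 1 : ℤ))
  rw [abs_of_nonneg (by linarith)] at hleft
  rw [abs_of_nonpos (by push_cast; linarith)] at hright
  push_cast at hright ⊢
  linarith

lemma inner_smooth_sum_smul_dirac (p : ι → ℝ) (v : ℝ) :
    inner ℝ (smooth (∑ i ∈ s, w i • dirac (p i)))
        (smooth (dirac v * ∑ i ∈ s, w i • dirac (p i))) =
      ∑ i ∈ s, ∑ j ∈ s, w i * w j * tent (p i - p j - v) := by
  rw [mul_sum, map_sum, map_sum, sum_inner]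
  refine sum_congr rfl fun i _ => ?_
  rw [inner_sum]
  refine sum_congr rfl fun j _ => ?_
  simp only [map_smul, inner_smul_left, inner_smul_right, conj_trivial, mul_smul_comm,
    dirac_mul_dirac, inner_smooth_dirac]
  rw [← sub_sub, sub_right_comm]
  ring

-- The tents centred at `-4, …, 4` dominate the indicator of `(-4, 4)`, and translating one factor
-- of an inner product does not change the Cauchy–Schwarz bound.
lemma collision_le_smoothNorm_sq (hw : ∀ i ∈ s, 0 ≤ w i) (p : ι → ℝ) {W : ℝ} (hW : 0 < W) :
    collision s w p (4 * W) ≤ 9 * smoothNorm (∑ i ∈ s, w i • dirac (p i / W)) ^ 2 := by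
  set ν := ∑ i ∈ s, w i • dirac (p i / W) with hν
  calc collision s w p (4 * W)
      ≤ ∑ i ∈ s, ∑ j ∈ s, ∑ v ∈ Finset.Icc (-4 : ℤ) 4,
          w i * w j * tent (p i / W - p j / W - v) := by
        refine sum_le_sum fun i hi => sum_le_sum fun j hj => ?_
        have hwij := mul_nonneg (hw i hi) (hw j hj)
        rw [← mul_sum]
        split_ifs with hnear
        · refine le_mul_of_one_le_right hwij (one_le_sum_tent_sub ?_)
          rwa [← sub_div, abs_div, abs_of_pos hW, div_lt_iff₀ hW]
        · exact mul_nonneg hwij (sum_nonneg fun _ _ => tent_nonneg _)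
    _ = ∑ v ∈ Finset.Icc (-4 : ℤ) 4, inner ℝ (smooth ν) (smooth (dirac v * ν)) := by
        simp_rw [hν, inner_smooth_sum_smul_dirac]
        rw [eq_comm, sum_comm]
        exact sum_congr rfl fun i _ => sum_comm
    _ ≤ ∑ v ∈ Finset.Icc (-4 : ℤ) 4, smoothNorm ν ^ 2 := by
        refine sum_le_sum fun v _ => (inner_smooth_le _ _).trans_eq ?_
        rw [smoothNorm_dirac_mul, sq]
    _ = 9 * smoothNorm ν ^ 2 := by simp

lemma smoothNorm_sum_smul_sq_le (hw : ∀ i ∈ s, 0 ≤ w i) {p : ι → ℝ} {μ : ι → FinMeasure}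
    {W B : ℝ} (hW : 1 ≤ W) (hμ : ∀ i ∈ s, μ i ∈ supportedIn (Set.Icc (p i) (p i + 2 * W)))
    (hB : ∀ i ∈ s, smoothNorm (μ i) ≤ B) :
    smoothNorm (∑ i ∈ s, w i • μ i) ^ 2 ≤
      9 * B ^ 2 * smoothNorm (∑ i ∈ s, w i • dirac (p i / W)) ^ 2 :=
  calc smoothNorm (∑ i ∈ s, w i • μ i) ^ 2
      ≤ B ^ 2 * collision s w p (3 * W) := smoothNorm_sum_smul_sq_le_collision hw hW hμ hB
    _ ≤ B ^ 2 * collision s w p (4 * W) := by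
        gcongr
        exact collision_mono hw p (by linarith)
    _ ≤ B ^ 2 * (9 * smoothNorm (∑ i ∈ s, w i • dirac (p i / W)) ^ 2) := by
        gcongr
        exact collision_le_smoothNorm_sq hw p (by linarith)
    _ = 9 * B ^ 2 * smoothNorm (∑ i ∈ s, w i • dirac (p i / W)) ^ 2 := by ring

lemma smoothNorm_sum_smul_dirac_mul_sq_le (hw : ∀ i ∈ s, 0 ≤ w i) (p : ι → ℝ) {W : ℝ}
    (hW : 1 ≤ W) {y : ℝ} {μ : FinMeasure} (hμ : μ ∈ supportedIn (Set.Icc y (y + 2 * W))) :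
    smoothNorm ((∑ i ∈ s, w i • dirac (W * p i)) * μ) ^ 2 ≤
      9 * smoothNorm (∑ i ∈ s, w i • dirac (p i)) ^ 2 * smoothNorm μ ^ 2 := by
  have hW0 : W ≠ 0 := by linarith
  have hshift : dirac (-y) * μ ∈ supportedIn (Set.Icc 0 (2 * W)) := by
    simpa using dirac_mul_mem_supportedIn_Icc (-y) hμ
  have hblock (i : ι) : dirac (W * p i) * (dirac (-y) * μ) ∈
      supportedIn (Set.Icc (W * p i) (W * p i + 2 * W)) := by
    simpa using dirac_mul_mem_supportedIn_Icc (W * p i) hshift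
  have h := smoothNorm_sum_smul_sq_le hw hW (fun i _ => hblock i)
    (fun i _ => (smoothNorm_dirac_mul _ _).le)
  rw [smoothNorm_dirac_mul] at h
  simp only [mul_div_cancel_left₀ _ hW0] at h
  calc smoothNorm ((∑ i ∈ s, w i • dirac (W * p i)) * μ) ^ 2
      = smoothNorm (∑ i ∈ s, w i • (dirac (W * p i) * (dirac (-y) * μ))) ^ 2 := by
        rw [← smoothNorm_dirac_mul (-y), mul_left_comm, sum_mul]
        simp only [smul_mul_assoc]
    _ ≤ 9 * smoothNorm μ ^ 2 * smoothNorm (∑ i ∈ s, w i • dirac (p i)) ^ 2 := h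
    _ = 9 * smoothNorm (∑ i ∈ s, w i • dirac (p i)) ^ 2 * smoothNorm μ ^ 2 := by ring

lemma sum_sq_le_smoothNorm_sq (hw : ∀ i ∈ s, 0 ≤ w i) (p : ι → ℝ) :
    ∑ i ∈ s, w i ^ 2 ≤ smoothNorm (∑ i ∈ s, w i • dirac (p i)) ^ 2 := by
  have hsq := inner_smooth_sum_smul_dirac (s := s) (w := w) p 0
  rw [dirac_zero, one_mul, ← smoothNorm_sq] at hsq
  rw [hsq]
  refine sum_le_sum fun i hi => ?_
  calc w i ^ 2 = w i * w i * tent (p i - p i - 0) := by simp [tent, sq]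
    _ ≤ ∑ j ∈ s, w i * w j * tent (p i - p j - 0) :=
        single_le_sum (f := fun j => w i * w j * tent (p i - p j - 0))
          (fun j hj => mul_nonneg (mul_nonneg (hw i hi) (hw j hj)) (tent_nonneg _)) hi

end Collision

/-! ### The level measures of the four corner set -/

/-- The natural numbers below `4 ^ n` all of whose base-four digits are `0` or `1`. -/
def zeroOneNat : ℕ → Finset ℕ
  | 0 => {0}
  | n + 1 => zeroOneNat n ∪ (zeroOneNat n).image (· + 4 ^ n)

lemma three_mul_add_one_le_of_mem_zeroOneNat {n : ℕ} :
    ∀ a ∈ zeroOneNat n, 3 * a + 1 ≤ 4 ^ n := by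
  induction n with
  | zero => simp [zeroOneNat]
  | succ n ih =>
    intro a ha
    simp only [zeroOneNat, mem_union, mem_image] at ha
    rw [pow_succ]
    rcases ha with ha | ⟨b, hb, rfl⟩
    · have := ih a ha
      omega
    · have := ih b hb
      omega

lemma disjoint_zeroOneNat_image_add (n : ℕ) :
    Disjoint (zeroOneNat n) ((zeroOneNat n).image (· + 4 ^ n)) := by
  rw [Finset.disjoint_left]
  intro a ha hb
  obtain ⟨b, -, rfl⟩ := mem_image.1 hb
  have := three_mul_add_one_le_of_mem_zeroOneNat _ ha
  omega

lemma card_zeroOneNat (n : ℕ) : (zeroOneNat n).card = 2 ^ n := by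
  induction n with
  | zero => simp [zeroOneNat]
  | succ n ih =>
    rw [zeroOneNat, card_union_of_disjoint (disjoint_zeroOneNat_image_add n),
      card_image_of_injective _ (add_left_injective _), ih, pow_succ, mul_two]

lemma prod_one_add_dirac_eq_sum (n : ℕ) (c : ℝ) :
    ∏ i ∈ range n, (1 + dirac (c * 4 ^ i)) = ∑ a ∈ zeroOneNat n, dirac (c * a) := by
  induction n with
  | zero => simp [zeroOneNat, dirac_zero]
  | succ n ih =>
    rw [prod_range_succ, ih, zeroOneNat, sum_union (disjoint_zeroOneNat_image_add n),
      sum_image fun _ _ _ _ h => add_left_injective _ h, mul_add, mul_one, sum_mul]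
    simp only [dirac_mul_dirac, Nat.cast_add, Nat.cast_pow, Nat.cast_ofNat, mul_add]

/-- The uniform measure on the `4 ^ n` points `c (a + t b)`, with `a` and `b` having `n` base-four
digits in `{0, 1}`. Up to scaling these are the left endpoints of the level-`n` pieces of
`cornerC t`. -/
noncomputable def levelMeasure (t : ℝ) (n : ℕ) (c : ℝ) : FinMeasure :=
  ∏ i ∈ range n, (1 / 4 : ℝ) • ((1 + dirac (c * 4 ^ i)) * (1 + dirac (c * t * 4 ^ i)))

lemma levelMeasure_zero (t c : ℝ) : levelMeasure t 0 c = 1 := by simp [levelMeasure]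

lemma levelMeasure_add (t : ℝ) (n m : ℕ) (c : ℝ) :
    levelMeasure t (n + m) c = levelMeasure t n c * levelMeasure t m (c * 4 ^ n) := by
  rw [levelMeasure, prod_range_add]
  congr 1
  refine prod_congr rfl fun i _ => ?_
  congr 4 <;> ring

lemma levelMeasure_eq_sum (t : ℝ) (n : ℕ) (c : ℝ) :
    levelMeasure t n c =
      ∑ q ∈ zeroOneNat n ×ˢ zeroOneNat n, (1 / 4 : ℝ) ^ n • dirac (c * (q.1 + t * q.2)) := by
  have hsum : ∑ q ∈ zeroOneNat n ×ˢ zeroOneNat n, dirac (c * (q.1 + t * q.2)) =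
      (∑ a ∈ zeroOneNat n, dirac (c * a)) * ∑ b ∈ zeroOneNat n, dirac (c * t * b) := by
    rw [sum_mul_sum, sum_product]
    simp only [dirac_mul_dirac, mul_add, mul_assoc]
  rw [levelMeasure, ← smul_sum, hsum, ← prod_one_add_dirac_eq_sum, ← prod_one_add_dirac_eq_sum,
    ← prod_mul_distrib]
  simp only [Algebra.smul_def, prod_mul_distrib, prod_const, map_pow, card_range]

lemma sum_weight_levelMeasure (n : ℕ) :
    ∑ _q ∈ zeroOneNat n ×ˢ zeroOneNat n, (1 / 4 : ℝ) ^ n = 1 := by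
  rw [sum_const, card_product, card_zeroOneNat, ← mul_pow, nsmul_eq_mul, Nat.cast_pow, ← mul_pow]
  norm_num

lemma levelMeasure_mem_supportedIn {t : ℝ} (ht₀ : 0 ≤ t) (ht₁ : t ≤ 1) (n : ℕ) {c : ℝ}
    (hc : 0 ≤ c) : levelMeasure t n c ∈ supportedIn (Set.Icc 0 (c * 4 ^ n)) := by
  rw [levelMeasure_eq_sum]
  refine Submodule.sum_mem _ fun q hq => Submodule.smul_mem _ _ (dirac_mem_supportedIn ?_)
  obtain ⟨ha, hb⟩ := mem_product.1 hq
  have ha : 3 * (q.1 : ℝ) + 1 ≤ 4 ^ n := mod_cast three_mul_add_one_le_of_mem_zeroOneNat _ ha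
  have hb : 3 * (q.2 : ℝ) + 1 ≤ 4 ^ n := mod_cast three_mul_add_one_le_of_mem_zeroOneNat _ hb
  have htb : t * q.2 ≤ q.2 := mul_le_of_le_one_left (Nat.cast_nonneg _) ht₁
  exact ⟨by positivity, mul_le_mul_of_nonneg_left (by linarith) hc⟩

lemma smoothNorm_mul_levelMeasure_le (t : ℝ) (n : ℕ) (c : ℝ) (μ : FinMeasure) :
    smoothNorm (μ * levelMeasure t n c) ≤ smoothNorm μ := by
  rw [levelMeasure_eq_sum]
  refine (smoothNorm_mul_sum_smul_dirac_le (fun _ _ => by positivity) _ μ).trans_eq ?_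
  rw [sum_weight_levelMeasure, one_mul]

/-- The squared `L²` norm at unit scale of the level-`n` measure with spacing one. -/
noncomputable def energy (t : ℝ) (n : ℕ) : ℝ := smoothNorm (levelMeasure t n 1) ^ 2

lemma smoothNorm_levelMeasure_mul_sq_le (t : ℝ) (m : ℕ) {W : ℝ} (hW : 1 ≤ W) {y : ℝ}
    {μ : FinMeasure} (hμ : μ ∈ supportedIn (Set.Icc y (y + 2 * W))) :
    smoothNorm (levelMeasure t m W * μ) ^ 2 ≤ 9 * energy t m * smoothNorm μ ^ 2 := by
  simpa only [energy, levelMeasure_eq_sum, one_mul] using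
    smoothNorm_sum_smul_dirac_mul_sq_le (s := zeroOneNat m ×ˢ zeroOneNat m)
      (w := fun _ => (1 / 4 : ℝ) ^ m) (fun _ _ => by positivity) (fun q => q.1 + t * q.2) hW hμ

lemma energy_add_le {t : ℝ} (ht₀ : 0 ≤ t) (ht₁ : t ≤ 1) (n m : ℕ) :
    energy t (n + m) ≤ 9 * energy t n * energy t m := by
  have hsupp : levelMeasure t n 1 ∈ supportedIn (Set.Icc 0 (0 + 2 * 4 ^ n)) :=
    supportedIn_mono (Set.Icc_subset_Icc le_rfl (by linarith [pow_pos (four_pos (α := ℝ)) n]))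
      (levelMeasure_mem_supportedIn ht₀ ht₁ n zero_le_one)
  calc energy t (n + m) = smoothNorm (levelMeasure t m (4 ^ n) * levelMeasure t n 1) ^ 2 := by
        rw [energy, levelMeasure_add, mul_comm, one_mul]
    _ ≤ 9 * energy t m * smoothNorm (levelMeasure t n 1) ^ 2 :=
        smoothNorm_levelMeasure_mul_sq_le t m (one_le_pow₀ (by norm_num)) hsupp
    _ = 9 * energy t n * energy t m := by rw [energy, energy]; ring

lemma energy_le_one (t : ℝ) (n : ℕ) : energy t n ≤ 1 := by
  have h := smoothNorm_mul_levelMeasure_le t n 1 1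
  rw [one_mul, smoothNorm_one] at h
  exact pow_le_one₀ (smoothNorm_nonneg _) h

lemma one_div_four_pow_le_energy (t : ℝ) (n : ℕ) : (1 / 4 : ℝ) ^ n ≤ energy t n := by
  rw [energy, levelMeasure_eq_sum]
  refine le_trans (le_of_eq ?_) (sum_sq_le_smoothNorm_sq (fun _ _ => by positivity) _)
  simp_rw [sq, ← sum_mul, sum_weight_levelMeasure, one_mul]

/-! ### Exponents of submultiplicative sequences -/

lemma exists_forall_le_mul_exp_of_eventually_le {u : ℕ → ℝ} {β : ℝ} (hu : ∀ n, u n ≤ 1)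
    (h : ∀ᶠ n : ℕ in atTop, u n ≤ Real.exp (-β * n)) :
    ∃ K ≥ (1 : ℝ), ∀ n : ℕ, u n ≤ K * Real.exp (-β * n) := by
  obtain ⟨N, hN⟩ := eventually_atTop.1 h
  have hK : 1 ≤ Real.exp (|β| * N) := Real.one_le_exp (by positivity)
  refine ⟨Real.exp (|β| * N), hK, fun n => ?_⟩
  rcases le_total N n with hn | hn
  · exact (hN n hn).trans (le_mul_of_one_le_left (Real.exp_nonneg _) hK)
  · rw [← Real.exp_add]
    refine (hu n).trans (Real.one_le_exp ?_)
    have hβ : β * n ≤ |β| * N :=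
      mul_le_mul (le_abs_self β) (Nat.cast_le.2 hn) (Nat.cast_nonneg _) (abs_nonneg β)
    linarith

section Submultiplicative

variable {u : ℕ → ℝ} {c C : ℝ}

lemma subadditive_log_mul (hC : 0 < C) (hpos : ∀ n, 0 < u n)
    (hmul : ∀ m n, u (m + n) ≤ C * u m * u n) : Subadditive fun n => Real.log (C * u n) := by
  intro m n
  have hm := hpos m
  have hn := hpos n
  have hmn := hpos (m + n)
  rw [← Real.log_mul (by positivity) (by positivity)]
  refine Real.log_le_log (by positivity) ?_
  calc C * u (m + n) ≤ C * (C * u m * u n) := mul_le_mul_of_nonneg_left (hmul m n) hC.le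
    _ = C * u m * (C * u n) := by ring

-- Fekete's lemma for `log (C * u n)`.
lemma exists_exponent_of_submultiplicative (hc₀ : 0 < c) (hc₁ : c ≤ 1) (hlow : ∀ n, c ^ n ≤ u n)
    (hone : ∀ n, u n ≤ 1) (hmul : ∀ m n, u (m + n) ≤ C * u m * u n) :
    ∃ b : ℝ, 0 ≤ b ∧ b ≤ -Real.log c ∧ (∀ n : ℕ, Real.exp (-b * n) ≤ C * u n) ∧
      ∀ κ > 0, ∃ K ≥ (1 : ℝ), ∀ n : ℕ, u n ≤ K * Real.exp (-(b - κ) * n) := by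
  have hpos (n : ℕ) : 0 < u n := (pow_pos hc₀ n).trans_le (hlow n)
  have hu0 : u 0 = 1 := (hone 0).antisymm (by simpa using hlow 0)
  have hC : 1 ≤ C := by simpa [hu0] using hmul 0 0
  have hC0 : 0 < C := zero_lt_one.trans_le hC
  have hCu (n : ℕ) : u n ≤ C * u n := le_mul_of_one_le_left (hpos n).le hC
  have hsub := subadditive_log_mul hC0 hpos hmul
  have hlog (n : ℕ) : Real.log c ≤ Real.log (C * u n) / n := by
    rcases n.eq_zero_or_pos with rfl | hn
    · simpa using Real.log_nonpos hc₀.le hc₁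
    · rw [le_div_iff₀ (Nat.cast_pos.2 hn), mul_comm, ← Real.log_pow]
      exact Real.log_le_log (pow_pos hc₀ n) ((hlow n).trans (hCu n))
  have hbdd : BddBelow (Set.range fun n : ℕ => Real.log (C * u n) / n) :=
    ⟨Real.log c, Set.forall_mem_range.2 hlog⟩
  have hlim := hsub.tendsto_lim hbdd
  refine ⟨-hsub.lim, ?_, neg_le_neg (ge_of_tendsto' hlim hlog), fun n => ?_, fun κ hκ => ?_⟩
  · refine neg_nonneg.2 (le_of_tendsto_of_tendsto' hlim
      (tendsto_const_div_atTop_nhds_zero_nat (Real.log C)) fun n => ?_)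
    gcongr
    · exact mul_pos hC0 (hpos n)
    · exact mul_le_of_le_one_right hC0.le (hone n)
  · rcases n.eq_zero_or_pos with rfl | hn
    · simpa [hu0] using hC
    · have h := hsub.lim_le_div hbdd hn.ne'
      rwa [le_div_iff₀ (Nat.cast_pos.2 hn), Real.le_log_iff_exp_le (mul_pos hC0 (hpos n)),
        ← neg_neg hsub.lim] at h
  · refine exists_forall_le_mul_exp_of_eventually_le hone ?_
    filter_upwards [hlim.eventually_lt_const (lt_add_of_pos_right _ hκ), eventually_gt_atTop 0]
      with n hn hn0
    rw [div_lt_iff₀ (Nat.cast_pos.2 hn0), Real.log_lt_iff_lt_exp (mul_pos hC0 (hpos n))] at hn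
    calc u n ≤ C * u n := hCu n
      _ ≤ Real.exp ((hsub.lim + κ) * n) := hn.le
      _ = Real.exp (-(-hsub.lim - κ) * n) := by congr 1; ring

end Submultiplicative

/-- The energies decay at exponential rate `β`, with multiplicative constant `K ≥ 1`. -/
def EnergyDecay (t β K : ℝ) : Prop :=
  1 ≤ K ∧ ∀ n : ℕ, energy t n ≤ K * Real.exp (-β * n)

lemma exists_energy_exponent {t : ℝ} (ht₀ : 0 ≤ t) (ht₁ : t ≤ 1) :
    ∃ b : ℝ, 0 ≤ b ∧ b ≤ Real.log 4 ∧ (∀ n : ℕ, Real.exp (-b * n) ≤ 9 * energy t n) ∧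
      ∀ κ > 0, ∃ K, EnergyDecay t (b - κ) K := by
  obtain ⟨b, hb₀, hb, hlow, hupp⟩ := exists_exponent_of_submultiplicative (by norm_num)
    (by norm_num) (one_div_four_pow_le_energy t) (energy_le_one t) (energy_add_le ht₀ ht₁)
  rw [one_div, Real.log_inv, neg_neg] at hb
  exact ⟨b, hb₀, hb, hlow, hupp⟩

/-! ### Concentration and tails of random subset sums -/

lemma centralBinom_sq_mul_le (n : ℕ) : n.centralBinom ^ 2 * (2 * n + 1) ≤ 16 ^ n := by
  induction n with
  | zero => simp
  | succ n ih =>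
    refine Nat.le_of_mul_le_mul_left ?_ (pow_pos n.succ_pos 2)
    calc (n + 1) ^ 2 * ((n + 1).centralBinom ^ 2 * (2 * (n + 1) + 1))
        = ((n + 1) * (n + 1).centralBinom) ^ 2 * (2 * n + 3) := by ring
      _ = 4 * (2 * n + 1) * (2 * n + 3) * (n.centralBinom ^ 2 * (2 * n + 1)) := by
          rw [Nat.succ_mul_centralBinom_succ]
          ring
      _ ≤ 4 * (2 * n + 1) * (2 * n + 3) * 16 ^ n := Nat.mul_le_mul_left _ ih
      _ ≤ 4 * (4 * (n + 1) ^ 2) * 16 ^ n := Nat.mul_le_mul_right _ (by nlinarith)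
      _ = (n + 1) ^ 2 * 16 ^ (n + 1) := by ring

lemma choose_four_pow_half_mul_le {h : ℕ} (hh : 1 ≤ h) :
    ((4 ^ h).choose (4 ^ h / 2) : ℝ) * (1 / 2) ^ (4 ^ h) ≤ (1 / 2) ^ h := by
  obtain ⟨n, hn⟩ : ∃ n, 4 ^ h = 2 * n := even_iff_exists_two_mul.1
    ((by decide : Even 4).pow_of_ne_zero (by omega))
  have hcast : (4 : ℝ) ^ h = 2 * n := mod_cast hn
  have hbinom : ((2 * n).choose n : ℝ) ^ 2 * (2 * n) ≤ 16 ^ n := by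
    have : ((2 * n).choose n : ℝ) ^ 2 * (2 * n + 1) ≤ 16 ^ n := mod_cast centralBinom_sq_mul_le n
    nlinarith [sq_nonneg ((2 * n).choose n : ℝ)]
  rw [hn, Nat.mul_div_cancel_left n two_pos,
    ← pow_le_pow_iff_left₀ (by positivity) (by positivity) two_ne_zero]
  calc (((2 * n).choose n : ℝ) * (1 / 2) ^ (2 * n)) ^ 2
      = ((2 * n).choose n : ℝ) ^ 2 * (1 / 16) ^ n := by
        rw [mul_pow, ← pow_mul, mul_comm, show 2 * n * 2 = 4 * n by ring, pow_mul, mul_comm]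
        norm_num
    _ = ((2 * n).choose n : ℝ) ^ 2 * (4 : ℝ) ^ h * ((1 / 4) ^ h * (1 / 16) ^ n) := by
        have : (4 : ℝ) ^ h * (1 / 4) ^ h = 1 := by rw [← mul_pow]; norm_num
        linear_combination (-((2 * n).choose n : ℝ) ^ 2 * (1 / 16) ^ n) * this
    _ ≤ 16 ^ n * ((1 / 4) ^ h * (1 / 16) ^ n) := by
        rw [hcast]
        gcongr
    _ = ((1 / 2) ^ h) ^ 2 := by
        have : (16 : ℝ) ^ n * (1 / 16) ^ n = 1 := by rw [← mul_pow]; norm_num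
        rw [mul_left_comm, this, mul_one, ← pow_mul, mul_comm, pow_mul]
        norm_num

lemma sum_powerset_sub_half_sq {ι : Type*} (s : Finset ι) (d : ι → ℝ) :
    ∑ A ∈ s.powerset, (∑ j ∈ A, d j - (∑ j ∈ s, d j) / 2) ^ 2 = 2 ^ #s / 4 * ∑ j ∈ s, d j ^ 2 := by
  classical
  induction s using Finset.induction_on with
  | empty => simp
  | insert i s hi ih =>
    have hpair (A) (hA : A ∈ s.powerset) : (∑ j ∈ A, d j - (d i + ∑ j ∈ s, d j) / 2) ^ 2 +
        (∑ j ∈ insert i A, d j - (d i + ∑ j ∈ s, d j) / 2) ^ 2 =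
        2 * (∑ j ∈ A, d j - (∑ j ∈ s, d j) / 2) ^ 2 + d i ^ 2 / 2 := by
      rw [sum_insert fun h => hi (mem_powerset.1 hA h)]
      ring
    rw [sum_powerset_insert hi, card_insert_of_notMem hi, sum_insert hi, sum_insert hi,
      ← sum_add_distrib, sum_congr rfl hpair, sum_add_distrib, ← mul_sum, ih, sum_const,
      card_powerset, nsmul_eq_mul]
    push_cast
    ring

section SubsetSum

variable {ι : Type*} [Fintype ι] {d : ι → ℝ}

-- Littlewood–Offord: the sets counted form an antichain, so Sperner's theorem applies.
lemma card_sum_mem_Ico_le_choose {W : ℝ} (hW : 0 < W) (hd : ∀ j, W ≤ d j) (x : ℝ) :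
    #{A : Finset ι | x ≤ ∑ j ∈ A, d j ∧ ∑ j ∈ A, d j < x + W} ≤
      (Fintype.card ι).choose (Fintype.card ι / 2) := by
  classical
  refine IsAntichain.sperner fun A hA B hB hne hsub => ?_
  simp only [coe_filter, mem_univ, true_and, Set.mem_ofPred_eq] at hA hB
  obtain ⟨j, hjB, hjA⟩ := Finset.exists_of_ssubset (hsub.ssubset_of_ne hne)
  have hsum : ∑ i ∈ insert j A, d i ≤ ∑ i ∈ B, d i :=
    sum_le_sum_of_subset_of_nonneg (insert_subset hjB hsub) fun i _ _ => hW.le.trans (hd i)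
  rw [sum_insert hjA] at hsum
  linarith [hd j]

lemma card_abs_sub_sum_lt_le_choose {W : ℝ} (hW : 0 < W) (hd : ∀ j, W ≤ d j) (x : ℝ) :
    #{A : Finset ι | |x - ∑ j ∈ A, d j| < 3 * W} ≤
      6 * (Fintype.card ι).choose (Fintype.card ι / 2) := by
  classical
  calc #{A : Finset ι | |x - ∑ j ∈ A, d j| < 3 * W}
      ≤ #((range 6).biUnion fun i => {A : Finset ι |
          x - 3 * W + i * W ≤ ∑ j ∈ A, d j ∧ ∑ j ∈ A, d j < x - 3 * W + i * W + W}) := by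
        refine card_le_card fun A hA => ?_
        simp only [mem_filter, mem_univ, true_and, mem_biUnion, mem_range] at hA ⊢
        obtain ⟨hlow, hupp⟩ := abs_lt.1 hA
        have hnonneg : 0 ≤ (∑ j ∈ A, d j - (x - 3 * W)) / W := div_nonneg (by linarith) hW.le
        have hle := Nat.floor_le hnonneg
        have hlt := Nat.lt_floor_add_one ((∑ j ∈ A, d j - (x - 3 * W)) / W)
        rw [le_div_iff₀ hW] at hle
        rw [div_lt_iff₀ hW] at hlt
        refine ⟨⌊(∑ j ∈ A, d j - (x - 3 * W)) / W⌋₊, ?_, by linarith, by linarith⟩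
        rw [Nat.floor_lt hnonneg, div_lt_iff₀ hW]
        push_cast
        linarith
    _ ≤ ∑ i ∈ range 6, #{A : Finset ι |
          x - 3 * W + i * W ≤ ∑ j ∈ A, d j ∧ ∑ j ∈ A, d j < x - 3 * W + i * W + W} :=
        card_biUnion_le
    _ ≤ ∑ i ∈ range 6, (Fintype.card ι).choose (Fintype.card ι / 2) :=
        sum_le_sum fun i _ => card_sum_mem_Ico_le_choose hW hd _
    _ = 6 * (Fintype.card ι).choose (Fintype.card ι / 2) := by simp

lemma sum_half_pow_abs_sub_sum_lt_le {h : ℕ} (hh : 1 ≤ h) (hcard : Fintype.card ι = 4 ^ h) {W : ℝ}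
    (hW : 0 < W) (hd : ∀ j, W ≤ d j) (T : Finset (Finset ι)) (x : ℝ) :
    (∑ A ∈ T, if |x - ∑ j ∈ A, d j| < 3 * W then (1 / 2 : ℝ) ^ Fintype.card ι else 0) ≤
      6 * (1 / 2) ^ h :=
  calc (∑ A ∈ T, if |x - ∑ j ∈ A, d j| < 3 * W then (1 / 2 : ℝ) ^ Fintype.card ι else 0)
      ≤ ∑ A : Finset ι, if |x - ∑ j ∈ A, d j| < 3 * W then (1 / 2 : ℝ) ^ Fintype.card ι else 0 :=
        sum_le_sum_of_subset_of_nonneg (subset_univ T) fun A _ _ => by split_ifs <;> positivity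
    _ = #{A : Finset ι | |x - ∑ j ∈ A, d j| < 3 * W} * (1 / 2 : ℝ) ^ Fintype.card ι := by
        rw [← sum_filter, sum_const, nsmul_eq_mul]
    _ ≤ 6 * (Fintype.card ι).choose (Fintype.card ι / 2) * (1 / 2 : ℝ) ^ Fintype.card ι := by
        gcongr
        exact_mod_cast card_abs_sub_sum_lt_le_choose hW hd x
    _ ≤ 6 * (1 / 2) ^ h := by
        rw [mul_assoc, hcard]
        gcongr
        exact choose_four_pow_half_mul_le hh

-- Chebyshev's inequality.
lemma sum_half_pow_far_le {D R : ℝ} (hd : ∀ j, |d j| ≤ D) (hR : 0 < R) :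
    ∑ A : Finset ι with R ≤ |∑ j ∈ A, d j - (∑ j, d j) / 2|, (1 / 2 : ℝ) ^ Fintype.card ι ≤
      Fintype.card ι * D ^ 2 / (4 * R ^ 2) := by
  classical
  set k := Fintype.card ι
  have hvar : #{A : Finset ι | R ≤ |∑ j ∈ A, d j - (∑ j, d j) / 2|} * R ^ 2 ≤
      2 ^ k / 4 * (k * D ^ 2) :=
    calc #{A : Finset ι | R ≤ |∑ j ∈ A, d j - (∑ j, d j) / 2|} * R ^ 2
        = ∑ A : Finset ι with R ≤ |∑ j ∈ A, d j - (∑ j, d j) / 2|, R ^ 2 := by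
          rw [sum_const, nsmul_eq_mul]
      _ ≤ ∑ A : Finset ι with R ≤ |∑ j ∈ A, d j - (∑ j, d j) / 2|,
            (∑ j ∈ A, d j - (∑ j, d j) / 2) ^ 2 := by
          refine sum_le_sum fun A hA => ?_
          rw [← sq_abs (∑ j ∈ A, d j - _)]
          exact pow_le_pow_left₀ hR.le (mem_filter.1 hA).2 2
      _ ≤ ∑ A : Finset ι, (∑ j ∈ A, d j - (∑ j, d j) / 2) ^ 2 :=
          sum_le_sum_of_subset_of_nonneg (filter_subset _ _) fun _ _ _ => sq_nonneg _
      _ = 2 ^ k / 4 * ∑ j, d j ^ 2 := by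
          rw [← powerset_univ, sum_powerset_sub_half_sq, card_univ]
      _ ≤ 2 ^ k / 4 * ∑ _j : ι, D ^ 2 := by
          gcongr 2 ^ k / 4 * ∑ j, ?_ with j
          rw [← sq_abs (d j)]
          exact pow_le_pow_left₀ (abs_nonneg _) (hd j) 2
      _ = 2 ^ k / 4 * (k * D ^ 2) := by rw [sum_const, card_univ, nsmul_eq_mul]
  have hpow : (1 / 2 : ℝ) ^ k * 2 ^ k = 1 := by rw [← mul_pow]; norm_num
  rw [sum_const, nsmul_eq_mul, le_div_iff₀ (by positivity)]
  calc #{A : Finset ι | R ≤ |∑ j ∈ A, d j - (∑ j, d j) / 2|} * (1 / 2 : ℝ) ^ k * (4 * R ^ 2)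
      = 4 * (1 / 2 : ℝ) ^ k *
          (#{A : Finset ι | R ≤ |∑ j ∈ A, d j - (∑ j, d j) / 2|} * R ^ 2) := by ring
    _ ≤ 4 * (1 / 2 : ℝ) ^ k * (2 ^ k / 4 * (k * D ^ 2)) := by gcongr
    _ = k * D ^ 2 := by linear_combination (k * D ^ 2) * hpow

/-! ### Smoothing of a level measure by a random subset sum -/

variable {t : ℝ}

lemma smoothNorm_levelMeasure_add_mul_sq_le (ht₀ : 0 ≤ t) (ht₁ : t ≤ 1) (m n : ℕ) {y : ℝ}
    {μ : FinMeasure} (hμ : μ ∈ supportedIn (Set.Icc y (y + 4 ^ m))) :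
    smoothNorm (levelMeasure t (m + n) 1 * μ) ^ 2 ≤
      9 * energy t n * smoothNorm (levelMeasure t m 1 * μ) ^ 2 := by
  have hsupp : levelMeasure t m 1 * μ ∈ supportedIn (Set.Icc y (y + 2 * 4 ^ m)) :=
    supportedIn_mono (Set.Icc_subset_Icc (by linarith) (by linarith))
      (mul_mem_supportedIn_Icc (levelMeasure_mem_supportedIn ht₀ ht₁ m zero_le_one) hμ)
  rw [levelMeasure_add, one_mul, mul_comm (levelMeasure t m 1), mul_assoc]
  exact smoothNorm_levelMeasure_mul_sq_le t n (one_le_pow₀ (by norm_num)) hsupp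

/-- The law of the sum of `d` over a uniformly random subset of `ι`, restricted to the event that
the subset lies in `T`. -/
noncomputable def subsetSumMeasure (d : ι → ℝ) (T : Finset (Finset ι)) : FinMeasure :=
  ∑ A ∈ T, (1 / 2 : ℝ) ^ Fintype.card ι • dirac (∑ j ∈ A, d j)

lemma smoothNorm_levelMeasure_mul_subsetSumMeasure_sq_le (ht₀ : 0 ≤ t) (ht₁ : t ≤ 1) {l h : ℕ}
    (hh : 1 ≤ h) (hcard : Fintype.card ι = 4 ^ h) (hd : ∀ j, (4 : ℝ) ^ l ≤ d j)
    (T : Finset (Finset ι)) :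
    smoothNorm (levelMeasure t l 1 * subsetSumMeasure d T) ^ 2 ≤
      energy t l * (6 * (1 / 2) ^ h) := by
  have hmass : ∑ _A ∈ T, (1 / 2 : ℝ) ^ Fintype.card ι ≤ 1 :=
    calc ∑ _A ∈ T, (1 / 2 : ℝ) ^ Fintype.card ι
        ≤ ∑ _A : Finset ι, (1 / 2 : ℝ) ^ Fintype.card ι :=
          sum_le_sum_of_subset_of_nonneg (subset_univ T) fun _ _ _ => by positivity
      _ = 1 := by simp
  have hblock (A : Finset ι) : dirac (∑ j ∈ A, d j) * levelMeasure t l 1 ∈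
      supportedIn (Set.Icc (∑ j ∈ A, d j) (∑ j ∈ A, d j + 2 * 4 ^ l)) :=
    supportedIn_mono (Set.Icc_subset_Icc (by simp)
      (by linarith [pow_pos (four_pos (α := ℝ)) l]))
      (dirac_mul_mem_supportedIn_Icc _ (levelMeasure_mem_supportedIn ht₀ ht₁ l zero_le_one))
  calc smoothNorm (levelMeasure t l 1 * subsetSumMeasure d T) ^ 2
      = smoothNorm (∑ A ∈ T, (1 / 2 : ℝ) ^ Fintype.card ι •
          (dirac (∑ j ∈ A, d j) * levelMeasure t l 1)) ^ 2 := by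
        rw [subsetSumMeasure, mul_comm, sum_mul]
        simp only [smul_mul_assoc]
    _ ≤ energy t l * collision T (fun _ => (1 / 2 : ℝ) ^ Fintype.card ι)
          (fun A => ∑ j ∈ A, d j) (3 * 4 ^ l) :=
        smoothNorm_sum_smul_sq_le_collision (fun _ _ => by positivity)
          (one_le_pow₀ (by norm_num)) (fun A _ => hblock A)
          (fun A _ => (smoothNorm_dirac_mul _ _).le)
    _ ≤ energy t l * (1 * (6 * (1 / 2) ^ h)) := by
        refine mul_le_mul_of_nonneg_left ?_ (sq_nonneg _)
        refine (collision_le_of_concentration (fun _ _ => by positivity) fun A _ =>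
          sum_half_pow_abs_sub_sum_lt_le hh hcard (by positivity) hd T _).trans ?_
        gcongr
    _ = energy t l * (6 * (1 / 2) ^ h) := by rw [one_mul]

lemma smoothNorm_levelMeasure_mul_near_sq_le (ht₀ : 0 ≤ t) (ht₁ : t ≤ 1) {l h h' n : ℕ}
    (hh : 1 ≤ h) (hcard : Fintype.card ι = 4 ^ h) (hd : ∀ j, (4 : ℝ) ^ l ≤ d j)
    {T : Finset (Finset ι)} {m : ℝ} (hT : ∀ A ∈ T, |∑ j ∈ A, d j - m| < 4 ^ (l + h') / 2) :
    smoothNorm (levelMeasure t (l + h' + n) 1 * subsetSumMeasure d T) ^ 2 ≤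
      9 * energy t n * (energy t l * (6 * (1 / 2) ^ h)) := by
  set ν := subsetSumMeasure d T
  have hν : ν ∈ supportedIn
      (Set.Icc (m - 4 ^ (l + h') / 2) (m - 4 ^ (l + h') / 2 + 4 ^ (l + h'))) := by
    refine Submodule.sum_mem _ fun A hA => Submodule.smul_mem _ _ (dirac_mem_supportedIn ?_)
    obtain ⟨hlow, hupp⟩ := abs_lt.1 (hT A hA)
    constructor <;> linarith
  have hcontract : smoothNorm (levelMeasure t (l + h') 1 * ν) ≤
      smoothNorm (levelMeasure t l 1 * ν) := by
    rw [levelMeasure_add, mul_right_comm]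
    exact smoothNorm_mul_levelMeasure_le _ _ _ _
  calc smoothNorm (levelMeasure t (l + h' + n) 1 * ν) ^ 2
      ≤ 9 * energy t n * smoothNorm (levelMeasure t (l + h') 1 * ν) ^ 2 :=
        smoothNorm_levelMeasure_add_mul_sq_le ht₀ ht₁ (l + h') n hν
    _ ≤ 9 * energy t n * (energy t l * (6 * (1 / 2) ^ h)) := by
        refine mul_le_mul_of_nonneg_left ?_ (mul_nonneg (by norm_num) (sq_nonneg _))
        exact (pow_le_pow_left₀ (smoothNorm_nonneg _) hcontract 2).trans
          (smoothNorm_levelMeasure_mul_subsetSumMeasure_sq_le ht₀ ht₁ hh hcard hd T)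

lemma sum_half_pow_far_le_of_scale {l h h' r : ℕ} (hr : 2 * h' = h + 2 * r)
    (hcard : Fintype.card ι = 4 ^ h) (hd : ∀ j, |d j| ≤ 8 * 4 ^ l) :
    ∑ A : Finset ι with 4 ^ (l + h') / 2 ≤ |∑ j ∈ A, d j - (∑ j, d j) / 2|,
      (1 / 2 : ℝ) ^ Fintype.card ι ≤ 64 * (1 / 16) ^ r := by
  refine (sum_half_pow_far_le hd (by positivity)).trans_eq ?_
  have hscale : ((4 : ℝ) ^ h') ^ 2 = 4 ^ h * 16 ^ r := by
    rw [← pow_mul, mul_comm, hr, pow_add, pow_mul]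
    norm_num
  rw [hcard, div_eq_iff (by positivity)]
  push_cast
  calc (4 : ℝ) ^ h * (8 * 4 ^ l) ^ 2
      = 64 * ((1 / 16) ^ r * 16 ^ r) * (4 ^ l) ^ 2 * 4 ^ h := by
        rw [← mul_pow]
        norm_num
        ring
    _ = 64 * (1 / 16) ^ r * (4 ^ l) ^ 2 * ((4 : ℝ) ^ h') ^ 2 := by rw [hscale]; ring
    _ = 64 * (1 / 16) ^ r * (4 * (4 ^ (l + h') / 2) ^ 2) := by rw [pow_add]; ring

lemma smoothNorm_levelMeasure_mul_sq_le_of_mass (n r : ℕ) {T : Finset (Finset ι)}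
    (hT : ∑ _A ∈ T, (1 / 2 : ℝ) ^ Fintype.card ι ≤ 64 * (1 / 16) ^ r) :
    smoothNorm (levelMeasure t n 1 * subsetSumMeasure d T) ^ 2 ≤
      4096 * energy t n * (1 / 4) ^ r :=
  calc smoothNorm (levelMeasure t n 1 * subsetSumMeasure d T) ^ 2
      ≤ (64 * (1 / 16) ^ r * smoothNorm (levelMeasure t n 1)) ^ 2 :=
        pow_le_pow_left₀ (smoothNorm_nonneg _)
          ((smoothNorm_mul_sum_smul_dirac_le (fun _ _ => by positivity) _ _).trans
            (mul_le_mul_of_nonneg_right hT (smoothNorm_nonneg _))) 2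
    _ = 4096 * energy t n * (1 / 256) ^ r := by
        rw [mul_pow, mul_pow, ← pow_mul, mul_comm r, pow_mul, energy]
        norm_num
        ring
    _ ≤ 4096 * energy t n * (1 / 4) ^ r :=
        mul_le_mul_of_nonneg_left (pow_le_pow_left₀ (by norm_num) (by norm_num) r)
          (mul_nonneg (by norm_num) (sq_nonneg _))

lemma EnergyDecay.mul_le {β K : ℝ} (hE : EnergyDecay t β K) (m n : ℕ) :
    energy t m * energy t n ≤ K ^ 2 * Real.exp (-β * (m + n)) :=
  calc energy t m * energy t n ≤ K * Real.exp (-β * m) * (K * Real.exp (-β * n)) :=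
        mul_le_mul (hE.2 m) (hE.2 n) (sq_nonneg _)
          (mul_nonneg (zero_le_one.trans hE.1) (Real.exp_nonneg _))
    _ = K ^ 2 * Real.exp (-β * (m + n)) := by
        rw [mul_add, Real.exp_add]
        ring

-- Sums near the mean are controlled by Littlewood–Offord, those far from it by Chebyshev.
lemma EnergyDecay.smoothNorm_mul_subsetSumMeasure_sq_le {β K : ℝ} (hE : EnergyDecay t β K)
    (ht₀ : 0 ≤ t) (ht₁ : t ≤ 1) {l h h' r n : ℕ} (hh : 1 ≤ h) (hr : 2 * h' = h + 2 * r)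
    (hβ : Real.exp (β * h') * (1 / 2) ^ h ≤ (1 / 4) ^ r) (hcard : Fintype.card ι = 4 ^ h)
    (hd : ∀ j, d j ∈ Set.Icc (4 ^ l) (8 * 4 ^ l)) :
    smoothNorm (levelMeasure t (l + h' + n) 1 * subsetSumMeasure d univ) ^ 2 ≤
      10000 * K ^ 2 * Real.exp (-β * (l + h' + n : ℕ)) * (1 / 4) ^ r := by
  set μ := levelMeasure t (l + h' + n) 1
  set E := Real.exp (-β * (l + h' + n : ℕ))
  set far : Finset ι → Prop := fun A => 4 ^ (l + h') / 2 ≤ |∑ j ∈ A, d j - (∑ j, d j) / 2|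
  have hfar : smoothNorm (μ * subsetSumMeasure d {A | far A}) ^ 2 ≤
      4096 * (K * E) * (1 / 4) ^ r := by
    refine (smoothNorm_levelMeasure_mul_sq_le_of_mass _ _
      (sum_half_pow_far_le_of_scale hr hcard fun j => abs_le.2 ⟨?_, (hd j).2⟩)).trans ?_
    · linarith [(hd j).1, pow_pos (four_pos (α := ℝ)) l]
    · gcongr
      exact hE.2 _
  have hnear : smoothNorm (μ * subsetSumMeasure d {A | ¬ far A}) ^ 2 ≤
      54 * (K ^ 2 * E) * (1 / 4) ^ r :=
    calc smoothNorm (μ * subsetSumMeasure d {A | ¬ far A}) ^ 2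
        ≤ 9 * energy t n * (energy t l * (6 * (1 / 2) ^ h)) :=
          smoothNorm_levelMeasure_mul_near_sq_le ht₀ ht₁ hh hcard (fun j => (hd j).1)
            fun A hA => not_le.1 (mem_filter.1 hA).2
      _ = 54 * (energy t n * energy t l) * (1 / 2) ^ h := by ring
      _ ≤ 54 * (K ^ 2 * Real.exp (-β * (n + l))) * (1 / 2) ^ h :=
          mul_le_mul_of_nonneg_right (mul_le_mul_of_nonneg_left (hE.mul_le n l) (by norm_num))
            (by positivity)
      _ = 54 * (K ^ 2 * E) * (Real.exp (β * h') * (1 / 2) ^ h) := by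
          rw [show -β * (n + l) = -β * (l + h' + n : ℕ) + β * h' by push_cast; ring, Real.exp_add]
          ring
      _ ≤ 54 * (K ^ 2 * E) * (1 / 4) ^ r := by gcongr
  have hsplit : subsetSumMeasure d univ =
      subsetSumMeasure d {A | far A} + subsetSumMeasure d {A | ¬ far A} :=
    (sum_filter_add_sum_filter_not _ _ _).symm
  have hKE : K * E ≤ K ^ 2 * E := by
    gcongr
    nlinarith [hE.1]
  have hrpos : (0 : ℝ) ≤ (1 / 4) ^ r := by positivity
  rw [hsplit, mul_add]
  refine (smoothNorm_add_sq_le _ _).trans ?_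
  nlinarith [mul_le_mul_of_nonneg_right hKE hrpos,
    mul_nonneg (mul_nonneg (sq_nonneg K) (Real.exp_nonneg _ : 0 ≤ E)) hrpos]

end SubsetSum

/-! ### Branching sets -/

/-- The uniform probability measure on a finite set of reals. -/
noncomputable def uniform (X : Finset ℝ) : FinMeasure :=
  (#X : ℝ)⁻¹ • ∑ x ∈ X, dirac x

lemma uniform_mem_supportedIn {X : Finset ℝ} {I : Set ℝ} (h : ↑X ⊆ I) :
    uniform X ∈ supportedIn I :=
  Submodule.smul_mem _ _ (Submodule.sum_mem _ fun _ hx => dirac_mem_supportedIn (h hx))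

lemma uniform_union {X Y : Finset ℝ} (hdisj : Disjoint X Y) (hcard : #X = #Y) :
    uniform (X ∪ Y) = (1 / 2 : ℝ) • (uniform Y + uniform X) := by
  rw [uniform, uniform, uniform, sum_union hdisj, card_union_of_disjoint hdisj, hcard, ← smul_add,
    smul_smul, add_comm (∑ x ∈ X, dirac x)]
  push_cast
  rw [← two_mul, mul_inv, one_div]

/-- The width `4 ^ (L * M - h)` of the intervals containing a branching set of depth `M`: a sum of
`4 ^ h` of them has length `4 ^ (L * M)`. -/
noncomputable def cellWidth (L h M : ℕ) : ℝ := 4 ^ (L * M) / 4 ^ h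

lemma cellWidth_pos (L h M : ℕ) : 0 < cellWidth L h M := by
  rw [cellWidth]
  positivity

lemma cellWidth_succ (L h M : ℕ) : cellWidth L h (M + 1) = 4 ^ L * cellWidth L h M := by
  rw [cellWidth, cellWidth, mul_add, mul_one, pow_add]
  ring

/-- `IsBranching L h σ X y` says that `X ⊆ [y, y + cellWidth L h σ.length]` is the set of leaves of
a binary tree whose branching at each scale is prescribed by `σ`, listed from the coarsest scale
down: at an entry `none` the tree does not branch, and at an entry `some r` it splits into two
branching sets at a distance between `2 ^ r` and `2 ^ (r + 1)` times `4 ^ (L * M)`, where `M` is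
their depth. -/
def IsBranching (L h : ℕ) : List (Option ℕ) → Finset ℝ → ℝ → Prop
  | [], X, y => (∃ x, X = {x}) ∧ ↑X ⊆ Set.Icc y (y + cellWidth L h 0)
  | none :: σ, X, y => (∃ y', IsBranching L h σ X y') ∧
      ↑X ⊆ Set.Icc y (y + cellWidth L h (σ.length + 1))
  | some r :: σ, X, y => (∃ X₀ X₁ y₀ y₁, Disjoint X₀ X₁ ∧ X = X₀ ∪ X₁ ∧
      IsBranching L h σ X₀ y₀ ∧ IsBranching L h σ X₁ y₁ ∧
      y₁ - y₀ ∈ Set.Icc (2 ^ r * 4 ^ (L * σ.length) : ℝ) (2 ^ (r + 1) * 4 ^ (L * σ.length)) ∧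
      r + 2 * h ≤ 2 * L) ∧
      ↑X ⊆ Set.Icc y (y + cellWidth L h (σ.length + 1))

/-- The number of scales at which the pattern `σ` branches. -/
def branchCount (σ : List (Option ℕ)) : ℕ := σ.countP Option.isSome

lemma branchCount_none_cons (σ : List (Option ℕ)) : branchCount (none :: σ) = branchCount σ :=
  List.countP_cons_of_neg (by simp)

lemma branchCount_some_cons (r : ℕ) (σ : List (Option ℕ)) :
    branchCount (some r :: σ) = branchCount σ + 1 :=
  List.countP_cons_of_pos (by rfl)

section Branching

variable {L h : ℕ}

lemma IsBranching.subset {σ : List (Option ℕ)} {X : Finset ℝ} {y : ℝ}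
    (hX : IsBranching L h σ X y) : ↑X ⊆ Set.Icc y (y + cellWidth L h σ.length) :=
  match σ, hX with
  | [], hX => hX.2
  | none :: _, hX => hX.2
  | some _ :: _, hX => hX.2

lemma IsBranching.card {σ : List (Option ℕ)} {X : Finset ℝ} {y : ℝ}
    (hX : IsBranching L h σ X y) : #X = 2 ^ branchCount σ := by
  induction σ generalizing X y with
  | nil =>
    obtain ⟨⟨x, rfl⟩, -⟩ := hX
    simp [branchCount]
  | cons o σ ih =>
    cases o with
    | none =>
      obtain ⟨⟨y', hX⟩, -⟩ := hX
      rw [branchCount_none_cons, ih hX]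
    | some r =>
      obtain ⟨⟨X₀, X₁, y₀, y₁, hdisj, rfl, hX₀, hX₁, -⟩, -⟩ := hX
      rw [card_union_of_disjoint hdisj, ih hX₀, ih hX₁, branchCount_some_cons, pow_succ,
        mul_two]

variable {ι : Type*} [Fintype ι] {t : ℝ}

lemma prod_uniform_union [DecidableEq ι] {X₀ X₁ : ι → Finset ℝ}
    (hdisj : ∀ j, Disjoint (X₀ j) (X₁ j)) (hcard : ∀ j, #(X₀ j) = #(X₁ j)) :
    ∏ j, uniform (X₀ j ∪ X₁ j) =
      ∑ A : Finset ι, (1 / 2 : ℝ) ^ Fintype.card ι • ∏ j, uniform (A.piecewise X₁ X₀ j) := by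
  have hpiecewise (A : Finset ι) : ∏ j, uniform (A.piecewise X₁ X₀ j) =
      (∏ j ∈ A, uniform (X₁ j)) * ∏ j ∈ univ \ A, uniform (X₀ j) := by
    have happly (j : ι) : uniform (A.piecewise X₁ X₀ j) =
        A.piecewise (fun j => uniform (X₁ j)) (fun j => uniform (X₀ j)) j :=
      apply_ite uniform _ _ _
    simp only [happly, prod_piecewise, univ_inter]
  simp_rw [uniform_union (hdisj _) (hcard _), Algebra.smul_def, prod_mul_distrib, prod_const,
    prod_add, mul_sum, hpiecewise, map_pow, card_univ, powerset_univ]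

lemma sum_piecewise_eq_add [DecidableEq ι] (A : Finset ι) (y₀ y₁ : ι → ℝ) :
    ∑ j, A.piecewise y₁ y₀ j = ∑ j, y₀ j + ∑ j ∈ A, (y₁ j - y₀ j) := by
  rw [sum_piecewise, univ_inter, sum_sub_distrib, ← sum_sdiff (subset_univ A)]
  ring

lemma smoothNorm_levelMeasure_mul_sum_smul_sq_le {κ : Type*} {s : Finset κ} {w z : κ → ℝ}
    {μ : κ → FinMeasure} (n : ℕ) {U B : ℝ} (hw : ∀ i ∈ s, 0 ≤ w i) (hU : 1 ≤ U)
    (hμ : ∀ i ∈ s, μ i ∈ supportedIn (Set.Icc (z i) (z i + 2 * U)))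
    (hB : ∀ i ∈ s, smoothNorm (μ i) ^ 2 ≤ B) :
    smoothNorm (levelMeasure t n U * ∑ i ∈ s, w i • μ i) ^ 2 ≤
      9 * B * smoothNorm (levelMeasure t n 1 * ∑ i ∈ s, w i • dirac (z i / U)) ^ 2 := by
  rcases s.eq_empty_or_nonempty with rfl | ⟨i₀, hi₀⟩
  · simp [smoothNorm]
  have hB₀ : 0 ≤ B := (sq_nonneg _).trans (hB i₀ hi₀)
  have hU₀ : U ≠ 0 := by linarith
  have hpos (q : ℕ × ℕ) (i : κ) :
      (U * (q.1 + t * q.2) + z i) / U = 1 * (q.1 + t * q.2) + z i / U := by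
    field_simp
  have hblock := smoothNorm_sum_smul_sq_le (s := (zeroOneNat n ×ˢ zeroOneNat n) ×ˢ s)
    (w := fun i => (1 / 4 : ℝ) ^ n * w i.2) (p := fun i => U * (i.1.1 + t * i.1.2) + z i.2)
    (μ := fun i => dirac (U * (i.1.1 + t * i.1.2)) * μ i.2) (B := √B)
    (fun i hi => mul_nonneg (by positivity) (hw _ (mem_product.1 hi).2)) hU
    (fun i hi => by
      simpa only [add_assoc] using
        dirac_mul_mem_supportedIn_Icc _ (hμ i.2 (mem_product.1 hi).2))
    (fun i hi => by
      rw [smoothNorm_dirac_mul]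
      exact Real.le_sqrt_of_sq_le (hB i.2 (mem_product.1 hi).2))
  rw [Real.sq_sqrt hB₀] at hblock
  rw [sum_product (_ ×ˢ _), sum_product (_ ×ˢ _)] at hblock
  simpa only [levelMeasure_eq_sum, sum_mul_sum, smul_mul_smul_comm, dirac_mul_dirac, hpos]
    using hblock

lemma levelMeasure_mul_prod_uniform_mem_supportedIn (ht₀ : 0 ≤ t) (ht₁ : t ≤ 1)
    (hcard : Fintype.card ι = 4 ^ h) {σ : List (Option ℕ)} {X : ι → Finset ℝ} {y : ι → ℝ}
    (hX : ∀ j, IsBranching L h σ (X j) (y j)) :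
    levelMeasure t (L * σ.length) 1 * ∏ j, uniform (X j) ∈
      supportedIn (Set.Icc (∑ j, y j) (∑ j, y j + 2 * 4 ^ (L * σ.length))) := by
  have hprod := prod_mem_supportedIn_Icc univ fun j _ => uniform_mem_supportedIn (hX j).subset
  have hlevel := levelMeasure_mem_supportedIn ht₀ ht₁ (L * σ.length) zero_le_one
  have hwidth : ∑ _j : ι, cellWidth L h σ.length = 4 ^ (L * σ.length) := by
    rw [sum_const, card_univ, hcard, nsmul_eq_mul, cellWidth]
    push_cast
    field_simp
  refine supportedIn_mono (Set.Icc_subset_Icc (by simp) ?_)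
    (mul_mem_supportedIn_Icc hlevel hprod)
  rw [sum_add_distrib, hwidth]
  linarith

lemma smoothNorm_prod_uniform_singleton (x : ι → ℝ) :
    smoothNorm (∏ j, uniform {x j}) = 1 := by
  classical
  have hsub (s : Finset ι) : smoothNorm (∏ j ∈ s, uniform {x j}) = 1 := by
    induction s using Finset.induction_on with
    | empty => rw [prod_empty, smoothNorm_one]
    | insert i s hi ih =>
      rw [prod_insert hi, uniform, card_singleton, sum_singleton, Nat.cast_one, inv_one, one_smul,
        smoothNorm_dirac_mul, ih]
  exact hsub univ

lemma div_mem_Icc_of_mem_dyadic {r : ℕ} {x U : ℝ} (hU : 0 < U)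
    (hx : x ∈ Set.Icc (2 ^ r * U) (2 ^ (r + 1) * U)) :
    x / U ∈ Set.Icc ((4 : ℝ) ^ (r / 2)) (8 * 4 ^ (r / 2)) := by
  have hfour : (4 : ℝ) ^ (r / 2) = 2 ^ (2 * (r / 2)) := by rw [pow_mul]; norm_num
  have hlow : (4 : ℝ) ^ (r / 2) ≤ 2 ^ r := by
    rw [hfour]
    exact pow_le_pow_right₀ (by norm_num) (by omega)
  have hupp : (2 : ℝ) ^ (r + 1) ≤ 8 * 4 ^ (r / 2) := by
    rw [hfour, show (8 : ℝ) = 2 ^ 3 by norm_num, ← pow_add]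
    exact pow_le_pow_right₀ (by norm_num) (by omega)
  exact ⟨hlow.trans ((le_div_iff₀ hU).2 hx.1), ((div_le_iff₀ hU).2 hx.2).trans hupp⟩

lemma EnergyDecay.nine_mul_le {β K : ℝ} (hE : EnergyDecay t β K) (n : ℕ) :
    9 * energy t n ≤ 90000 * K ^ 2 * Real.exp (-β * n) := by
  have hK : K * Real.exp (-β * n) ≤ K ^ 2 * Real.exp (-β * n) := by
    gcongr
    nlinarith [hE.1]
  have hpos : 0 ≤ K ^ 2 * Real.exp (-β * n) := by positivity
  linarith [hE.2 n]

lemma EnergyDecay.smoothNorm_prod_uniform_union_sq_le {β K : ℝ} (hE : EnergyDecay t β K)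
    (ht₀ : 0 ≤ t) (ht₁ : t ≤ 1) {h' r r' : ℕ} (hh : 1 ≤ h) (hr : 2 * h' = h + 2 * r) (hh' : h' ≤ h)
    (hβ : Real.exp (β * h') * (1 / 2) ^ h ≤ (1 / 4) ^ r) (hcard : Fintype.card ι = 4 ^ h)
    (hL : r' + 2 * h ≤ 2 * L) {σ : List (Option ℕ)} {X₀ X₁ : ι → Finset ℝ} {y₀ y₁ : ι → ℝ}
    (hdisj : ∀ j, Disjoint (X₀ j) (X₁ j)) (hX₀ : ∀ j, IsBranching L h σ (X₀ j) (y₀ j))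
    (hX₁ : ∀ j, IsBranching L h σ (X₁ j) (y₁ j))
    (hgap : ∀ j, y₁ j - y₀ j ∈
      Set.Icc (2 ^ r' * 4 ^ (L * σ.length) : ℝ) (2 ^ (r' + 1) * 4 ^ (L * σ.length)))
    {B : ℝ} (hB : ∀ (X : ι → Finset ℝ) (y : ι → ℝ), (∀ j, IsBranching L h σ (X j) (y j)) →
      smoothNorm (levelMeasure t (L * σ.length) 1 * ∏ j, uniform (X j)) ^ 2 ≤ B) :
    smoothNorm (levelMeasure t L (4 ^ (L * σ.length)) *
        (levelMeasure t (L * σ.length) 1 * ∏ j, uniform (X₀ j ∪ X₁ j))) ^ 2 ≤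
      90000 * K ^ 2 * Real.exp (-β * L) * (1 / 4) ^ r * B := by
  classical
  set U : ℝ := 4 ^ (L * σ.length)
  have hbranch (A : Finset ι) (j : ι) :
      IsBranching L h σ (A.piecewise X₁ X₀ j) (A.piecewise y₁ y₀ j) := by
    by_cases hj : j ∈ A
    · simpa only [piecewise_eq_of_mem _ _ _ hj] using hX₁ j
    · simpa only [piecewise_eq_of_notMem _ _ _ hj] using hX₀ j
  obtain ⟨n, hn⟩ : ∃ n, L = r' / 2 + h' + n := ⟨L - (r' / 2 + h'), by omega⟩
  have hsubset : smoothNorm (levelMeasure t L 1 * subsetSumMeasure (fun j => (y₁ j - y₀ j) / U)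
      univ) ^ 2 ≤ 10000 * K ^ 2 * Real.exp (-β * L) * (1 / 4) ^ r := by
    have := hE.smoothNorm_mul_subsetSumMeasure_sq_le (n := n) ht₀ ht₁ hh hr hβ hcard
      fun j => div_mem_Icc_of_mem_dyadic (by positivity) (hgap j)
    rwa [← hn] at this
  have hpositions : levelMeasure t L 1 * ∑ A : Finset ι, (1 / 2 : ℝ) ^ Fintype.card ι •
      dirac ((∑ j, A.piecewise y₁ y₀ j) / U) = dirac ((∑ j, y₀ j) / U) *
        (levelMeasure t L 1 * subsetSumMeasure (fun j => (y₁ j - y₀ j) / U) univ) := by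
    simp only [sum_piecewise_eq_add, add_div, ← dirac_mul_dirac, ← mul_smul_comm, ← mul_sum,
      mul_left_comm, subsetSumMeasure, sum_div]
  have hB₀ : 0 ≤ B := (sq_nonneg _).trans (hB X₀ y₀ hX₀)
  have hexpand := smoothNorm_levelMeasure_mul_sum_smul_sq_le (t := t) (s := univ)
    (w := fun _ => (1 / 2 : ℝ) ^ Fintype.card ι) L (fun _ _ => by positivity)
    (one_le_pow₀ (by norm_num) : 1 ≤ U) (fun A _ =>
      levelMeasure_mul_prod_uniform_mem_supportedIn ht₀ ht₁ hcard (hbranch A))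
    (fun A _ => hB _ _ (hbranch A))
  rw [hpositions, smoothNorm_dirac_mul] at hexpand
  rw [prod_uniform_union hdisj fun j => by rw [(hX₀ j).card, (hX₁ j).card], mul_sum]
  simp only [mul_smul_comm]
  refine hexpand.trans ?_
  nlinarith [mul_le_mul_of_nonneg_left hsubset hB₀]

lemma EnergyDecay.smoothNorm_mul_prod_uniform_sq_le {β K : ℝ} (hE : EnergyDecay t β K)
    (ht₀ : 0 ≤ t) (ht₁ : t ≤ 1) {h' r : ℕ} (hh : 1 ≤ h) (hr : 2 * h' = h + 2 * r) (hh' : h' ≤ h)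
    (hβ : Real.exp (β * h') * (1 / 2) ^ h ≤ (1 / 4) ^ r) (hcard : Fintype.card ι = 4 ^ h)
    {σ : List (Option ℕ)} {X : ι → Finset ℝ} {y : ι → ℝ}
    (hX : ∀ j, IsBranching L h σ (X j) (y j)) :
    smoothNorm (levelMeasure t (L * σ.length) 1 * ∏ j, uniform (X j)) ^ 2 ≤
      (90000 * K ^ 2 * Real.exp (-β * L)) ^ σ.length * (1 / 4) ^ (r * branchCount σ) := by
  induction σ generalizing X y with
  | nil =>
    choose x hx using fun j => (hX j).1
    simp [levelMeasure_zero, branchCount, hx, smoothNorm_prod_uniform_singleton]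
  | cons o σ ih =>
    rw [List.length_cons, mul_add, mul_one, levelMeasure_add, one_mul,
      mul_comm (levelMeasure t (L * σ.length) 1), mul_assoc, pow_succ]
    cases o with
    | none =>
      choose y' hX using fun j => (hX j).1
      refine (smoothNorm_levelMeasure_mul_sq_le t L (one_le_pow₀ (by norm_num))
        (levelMeasure_mul_prod_uniform_mem_supportedIn ht₀ ht₁ hcard hX)).trans ?_
      refine (mul_le_mul (hE.nine_mul_le L) (ih hX) (sq_nonneg _) (by positivity)).trans_eq ?_
      rw [branchCount_none_cons]
      ring
    | some r' =>
      choose X₀ X₁ y₀ y₁ hdisj hunion hX₀ hX₁ hgap hL using fun j => (hX j).1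
      obtain ⟨j⟩ : Nonempty ι := Fintype.card_pos_iff.1 (hcard ▸ by positivity)
      simp only [hunion]
      refine (hE.smoothNorm_prod_uniform_union_sq_le ht₀ ht₁ hh hr hh' hβ hcard (hL j) hdisj hX₀
        hX₁ hgap fun _ _ => ih).trans_eq ?_
      rw [branchCount_some_cons]
      ring

end Branching

/-! ### Separated sets contain branching sets -/

/-- The branching patterns of depth `M` that a branching set can have. -/
def patterns (L : ℕ) : ℕ → Finset (List (Option ℕ))
  | 0 => {[]}
  | M + 1 => (insertNone (range (2 * L + 1)) ×ˢ patterns L M).image fun p => p.1 :: p.2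

lemma card_patterns_le (L M : ℕ) : #(patterns L M) ≤ (2 * L + 2) ^ M := by
  induction M with
  | zero => simp [patterns]
  | succ M ih =>
    refine card_image_le.trans ?_
    rw [card_product, card_insertNone, card_range, pow_succ, mul_comm]
    exact Nat.mul_le_mul_right _ ih

lemma length_of_mem_patterns {L M : ℕ} {σ : List (Option ℕ)} (hσ : σ ∈ patterns L M) :
    σ.length = M := by
  induction M generalizing σ with
  | zero => simpa [patterns] using hσ
  | succ M ih =>
    obtain ⟨p, hp, rfl⟩ := mem_image.1 hσ
    rw [List.length_cons, ih (mem_product.1 hp).2]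

lemma sum_patterns_succ (L M : ℕ) (f : List (Option ℕ) → ℕ) :
    ∑ σ ∈ patterns L (M + 1), f σ =
      ∑ σ ∈ patterns L M, (f (none :: σ) + ∑ r ∈ range (2 * L + 1), f (some r :: σ)) := by
  have hinj : Function.Injective fun p : Option ℕ × List (Option ℕ) => p.1 :: p.2 :=
    fun p q h => Prod.ext (List.cons.inj h).1 (List.cons.inj h).2
  rw [patterns, sum_image hinj.injOn, sum_product_right]
  simp

/-- An upper bound for the size of a separated set all of whose branching at the scales given by
`σ` is accounted for: up to `4 ^ h` cells at every scale, and up to `4 ^ L` at a branching one. -/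
def patternWeight (L h : ℕ) (σ : List (Option ℕ)) : ℕ :=
  4 ^ (h * σ.length + L * branchCount σ)

lemma patternWeight_none_cons (L h : ℕ) (σ : List (Option ℕ)) :
    patternWeight L h (none :: σ) = 4 ^ h * patternWeight L h σ := by
  rw [patternWeight, patternWeight, branchCount_none_cons, List.length_cons, ← pow_add]
  ring

lemma four_pow_mul_patternWeight_le (L h r : ℕ) (σ : List (Option ℕ)) :
    4 ^ L * patternWeight L h σ ≤ patternWeight L h (some r :: σ) := by
  rw [patternWeight, patternWeight, branchCount_some_cons, List.length_cons, ← pow_add]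
  refine Nat.pow_le_pow_right (by norm_num) ?_
  linarith [Nat.zero_le h]

/-- `X` has a subset that is branching with pattern `σ`, based at `y`. -/
def ContainsBranching (L h : ℕ) (σ : List (Option ℕ)) (X : Finset ℝ) (y : ℝ) : Prop :=
  ∃ X' ⊆ X, IsBranching L h σ X' y

/-- The part of `X` in the `c`-th interval of length `w` to the right of `y`. -/
noncomputable def cell (X : Finset ℝ) (y w : ℝ) (c : ℕ) : Finset ℝ :=
  open Classical in {x ∈ X | x ∈ Set.Ico (y + c * w) (y + c * w + w)}

lemma cell_subset (X : Finset ℝ) (y w : ℝ) (c : ℕ) : cell X y w c ⊆ X := filter_subset _ _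

lemma mem_Ico_of_mem_cell {X : Finset ℝ} {y w x : ℝ} {c : ℕ} (hx : x ∈ cell X y w c) :
    x ∈ Set.Ico (y + c * w) (y + c * w + w) := (mem_filter.1 hx).2

lemma disjoint_cell (X : Finset ℝ) (y : ℝ) {w : ℝ} (hw : 0 ≤ w) {c₀ c₁ : ℕ} (hc : c₀ < c₁) :
    Disjoint (cell X y w c₀) (cell X y w c₁) := by
  refine disjoint_left.2 fun x hx₀ hx₁ => ?_
  have hstep : (c₀ : ℝ) + 1 ≤ c₁ := by exact_mod_cast hc
  nlinarith [(mem_Ico_of_mem_cell hx₀).2, (mem_Ico_of_mem_cell hx₁).1]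

lemma biUnion_cell {X : Finset ℝ} {y w : ℝ} {N : ℕ} (hw : 0 < w)
    (hX : ↑X ⊆ Set.Ico y (y + N * w)) : (range N).biUnion (cell X y w) = X := by
  refine (biUnion_subset.2 fun c _ => cell_subset X y w c).antisymm fun x hx => ?_
  obtain ⟨hlow, hupp⟩ := hX hx
  have hnonneg : 0 ≤ (x - y) / w := div_nonneg (by linarith) hw.le
  refine mem_biUnion.2 ⟨⌊(x - y) / w⌋₊, ?_, ?_⟩
  · rw [mem_range, Nat.floor_lt hnonneg, div_lt_iff₀ hw]
    linarith
  · have hfloor := Nat.floor_le hnonneg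
    have hlt := Nat.lt_floor_add_one ((x - y) / w)
    rw [le_div_iff₀ hw] at hfloor
    rw [div_lt_iff₀ hw] at hlt
    exact mem_filter.2 ⟨hx, by linarith, by linarith⟩

lemma sum_cell {X : Finset ℝ} {y w : ℝ} {N : ℕ} (hw : 0 < w) (hX : ↑X ⊆ Set.Ico y (y + N * w))
    {E : Type*} [AddCommMonoid E] (f : ℝ → E) :
    ∑ c ∈ range N, ∑ x ∈ cell X y w c, f x = ∑ x ∈ X, f x := by
  conv_rhs => rw [← biUnion_cell hw hX]
  refine (sum_biUnion fun c _ c' _ hne => ?_).symm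
  rcases hne.lt_or_gt with h | h
  · exact disjoint_cell X y hw.le h
  · exact (disjoint_cell X y hw.le h).symm

lemma sum_card_cell {X : Finset ℝ} {y w : ℝ} {N : ℕ} (hw : 0 < w)
    (hX : ↑X ⊆ Set.Ico y (y + N * w)) : ∑ c ∈ range N, #(cell X y w c) = #X := by
  simpa only [card_eq_sum_ones] using sum_cell hw hX fun _ => 1

lemma exists_dyadic_scale {L h c : ℕ} (hc : 4 ^ h ≤ c) (hcL : c < 4 ^ L) :
    ∃ r, 2 ^ r * 4 ^ h ≤ c ∧ c ≤ 2 ^ (r + 1) * 4 ^ h ∧ r + 2 * h ≤ 2 * L := by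
  have hpos : 0 < 4 ^ h := by positivity
  have hquot : c / 4 ^ h ≠ 0 := (Nat.div_pos hc hpos).ne'
  have hlow : 2 ^ Nat.log 2 (c / 4 ^ h) * 4 ^ h ≤ c :=
    (Nat.le_div_iff_mul_le hpos).1 (Nat.pow_log_le_self 2 hquot)
  have hupp : c < 2 ^ (Nat.log 2 (c / 4 ^ h) + 1) * 4 ^ h :=
    (Nat.div_lt_iff_lt_mul hpos).1 (Nat.lt_pow_succ_log_self one_lt_two _)
  refine ⟨_, hlow, hupp.le, (Nat.pow_lt_pow_iff_right one_lt_two).1 ?_ |>.le⟩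
  rw [pow_add, pow_mul, pow_mul]
  exact hlow.trans_lt hcL

section Counting

variable {L h : ℕ} {σ : List (Option ℕ)} {X : Finset ℝ} {y : ℝ}

lemma ContainsBranching.none_cons {Y : Finset ℝ} {y' : ℝ} (hY : ContainsBranching L h σ Y y')
    (hYX : Y ⊆ X) (hX : ↑X ⊆ Set.Icc y (y + cellWidth L h (σ.length + 1))) :
    ContainsBranching L h (none :: σ) X y := by
  obtain ⟨X', hX', hbranch⟩ := hY
  exact ⟨X', hX'.trans hYX, ⟨y', hbranch⟩, (coe_subset.2 (hX'.trans hYX)).trans hX⟩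

lemma containsBranching_some_cons {r c₀ c₁ : ℕ}
    (hX : ↑X ⊆ Set.Icc y (y + cellWidth L h (σ.length + 1)))
    (h₀ : ContainsBranching L h σ (cell X y (cellWidth L h σ.length) c₀)
      (y + c₀ * cellWidth L h σ.length))
    (h₁ : ContainsBranching L h σ (cell X y (cellWidth L h σ.length) c₁)
      (y + c₁ * cellWidth L h σ.length))
    (hc : c₀ < c₁) (hlow : 2 ^ r * 4 ^ h ≤ c₁ - c₀) (hupp : c₁ - c₀ ≤ 2 ^ (r + 1) * 4 ^ h)
    (hr : r + 2 * h ≤ 2 * L) : ContainsBranching L h (some r :: σ) X y := by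
  obtain ⟨X₀, hX₀, hbranch₀⟩ := h₀
  obtain ⟨X₁, hX₁, hbranch₁⟩ := h₁
  set w := cellWidth L h σ.length with hw_def
  have hw : 0 < w := cellWidth_pos L h _
  have hscale : (4 : ℝ) ^ (L * σ.length) = 4 ^ h * w := by
    rw [hw_def, cellWidth]
    field_simp
  have hsub : X₀ ∪ X₁ ⊆ X :=
    union_subset (hX₀.trans (cell_subset _ _ _ _)) (hX₁.trans (cell_subset _ _ _ _))
  have hcast : ((c₁ - c₀ : ℕ) : ℝ) = c₁ - c₀ := Nat.cast_sub hc.le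
  have hlow' : (2 ^ r * 4 ^ h : ℝ) ≤ c₁ - c₀ := by
    rw [← hcast]
    exact_mod_cast hlow
  have hupp' : (c₁ - c₀ : ℝ) ≤ 2 ^ (r + 1) * 4 ^ h := by
    rw [← hcast]
    exact_mod_cast hupp
  refine ⟨X₀ ∪ X₁, hsub, ⟨X₀, X₁, _, _, ?_, rfl, hbranch₀, hbranch₁, ⟨?_, ?_⟩, hr⟩,
    (coe_subset.2 hsub).trans hX⟩
  · exact (disjoint_cell X y hw.le hc).mono hX₀ hX₁
  · rw [hscale]
    nlinarith
  · rw [hscale]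
    nlinarith

open Classical in
lemma card_filter_containsBranching_mul_le
    (hX : ↑X ⊆ Set.Icc y (y + cellWidth L h (σ.length + 1))) :
    #{c ∈ range (4 ^ L) | ContainsBranching L h σ (cell X y (cellWidth L h σ.length) c)
        (y + c * cellWidth L h σ.length)} * patternWeight L h σ ≤
      (if ContainsBranching L h (none :: σ) X y then patternWeight L h (none :: σ) else 0) +
        ∑ r ∈ range (2 * L + 1), if ContainsBranching L h (some r :: σ) X y then
          patternWeight L h (some r :: σ) else 0 := by
  set N := {c ∈ range (4 ^ L) | ContainsBranching L h σ (cell X y (cellWidth L h σ.length) c)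
    (y + c * cellWidth L h σ.length)}
  rcases N.eq_empty_or_nonempty with hempty | hne
  · simp [hempty]
  by_cases hcard : #N ≤ 4 ^ h
  · obtain ⟨c, hc⟩ := hne
    rw [if_pos ((mem_filter.1 hc).2.none_cons (cell_subset _ _ _ _) hX), patternWeight_none_cons]
    exact (Nat.mul_le_mul_right _ hcard).trans (Nat.le_add_right _ _)
  · have hmin := mem_filter.1 (N.min'_mem hne)
    have hmax := mem_filter.1 (N.max'_mem hne)
    have hspread : 4 ^ h ≤ N.max' hne - N.min' hne := by
      have hsub : N ⊆ Icc (N.min' hne) (N.max' hne) :=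
        fun c hc => mem_Icc.2 ⟨N.min'_le c hc, N.le_max' c hc⟩
      have := card_le_card hsub
      rw [Nat.card_Icc] at this
      omega
    have hpos : 0 < 4 ^ h := by positivity
    obtain ⟨r, hlow, hupp, hr⟩ :=
      exists_dyadic_scale hspread ((Nat.sub_le _ _).trans_lt (mem_range.1 hmax.1))
    have hbranch : ContainsBranching L h (some r :: σ) X y :=
      containsBranching_some_cons hX hmin.2 hmax.2 (by omega) hlow hupp hr
    calc #N * patternWeight L h σ ≤ 4 ^ L * patternWeight L h σ :=
          Nat.mul_le_mul_right _ ((card_filter_le _ _).trans_eq (card_range _))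
      _ ≤ patternWeight L h (some r :: σ) := four_pow_mul_patternWeight_le L h r σ
      _ = if ContainsBranching L h (some r :: σ) X y then patternWeight L h (some r :: σ) else 0 :=
          (if_pos hbranch).symm
      _ ≤ ∑ r ∈ range (2 * L + 1), if ContainsBranching L h (some r :: σ) X y then
            patternWeight L h (some r :: σ) else 0 :=
          single_le_sum (f := fun r => if ContainsBranching L h (some r :: σ) X y then
            patternWeight L h (some r :: σ) else 0) (fun _ _ => Nat.zero_le _)
            (mem_range.2 (by omega))
      _ ≤ _ := Nat.le_add_left _ _

open Classical in
lemma card_le_sum_patternWeight {M : ℕ}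
    (hsep : (X : Set ℝ).Pairwise fun x x' => 1 ≤ |x - x'|)
    (hX : ↑X ⊆ Set.Ico y (y + cellWidth L h M)) :
    #X ≤ ∑ σ ∈ patterns L M, if ContainsBranching L h σ X y then patternWeight L h σ else 0 := by
  induction M generalizing X y with
  | zero =>
    rcases X.eq_empty_or_nonempty with rfl | ⟨x, hx⟩
    · simp
    have hwidth : cellWidth L h 0 ≤ 1 := by
      rw [cellWidth, mul_zero, pow_zero]
      exact div_le_one_of_le₀ (one_le_pow₀ (by norm_num)) (by positivity)
    have hcard : #X ≤ 1 := by
      refine card_le_one.2 fun a ha b hb => ?_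
      by_contra hne
      have hab : |a - b| < 1 := by
        rw [abs_lt]
        constructor <;> linarith [(hX ha).1, (hX ha).2, (hX hb).1, (hX hb).2]
      exact (hsep ha hb hne).not_gt hab
    have hbranch : ContainsBranching L h [] X y :=
      ⟨{x}, singleton_subset_iff.2 hx, ⟨x, rfl⟩, by
        simpa using Set.Ico_subset_Icc_self (hX hx)⟩
    simpa [patterns, hbranch, patternWeight, branchCount] using hcard
  | succ M ih =>
    set w := cellWidth L h M
    calc #X ≤ ∑ c ∈ range (4 ^ L), #(cell X y w c) := by
          refine (sum_card_cell (cellWidth_pos L h M) ?_).ge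
          rwa [cellWidth_succ, ← Nat.cast_ofNat, ← Nat.cast_pow] at hX
      _ ≤ ∑ c ∈ range (4 ^ L), ∑ σ ∈ patterns L M,
            if ContainsBranching L h σ (cell X y w c) (y + c * w) then patternWeight L h σ else 0 :=
          sum_le_sum fun c _ => ih (hsep.mono (coe_subset.2 (cell_subset _ _ _ _)))
            fun x hx => mem_Ico_of_mem_cell hx
      _ = ∑ σ ∈ patterns L M, #{c ∈ range (4 ^ L) |
            ContainsBranching L h σ (cell X y w c) (y + c * w)} * patternWeight L h σ := by
          rw [sum_comm]
          simp only [← sum_filter, sum_const, smul_eq_mul]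
      _ ≤ _ := by
          rw [sum_patterns_succ]
          refine sum_le_sum fun σ hσ => ?_
          obtain rfl := length_of_mem_patterns hσ
          exact card_filter_containsBranching_mul_le (hX.trans Set.Ico_subset_Icc_self)

lemma exists_containsBranching {M : ℕ} (hne : X.Nonempty)
    (hsep : (X : Set ℝ).Pairwise fun x x' => 1 ≤ |x - x'|)
    (hX : ↑X ⊆ Set.Ico y (y + cellWidth L h M)) :
    ∃ σ ∈ patterns L M, ContainsBranching L h σ X y ∧
      #X ≤ (2 * L + 2) ^ M * patternWeight L h σ := by
  classical
  set f : List (Option ℕ) → ℕ := fun σ =>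
    if ContainsBranching L h σ X y then patternWeight L h σ else 0
  have hcount : #X ≤ ∑ σ ∈ patterns L M, f σ := card_le_sum_patternWeight hsep hX
  have hpatterns : (patterns L M).Nonempty := by
    rw [nonempty_iff_ne_empty]
    rintro hempty
    rw [hempty, sum_empty] at hcount
    exact hne.card_pos.not_ge hcount
  obtain ⟨σ, hσ, hmax⟩ := exists_max_image (patterns L M) f hpatterns
  have hle : #X ≤ (2 * L + 2) ^ M * f σ :=
    calc #X ≤ ∑ σ ∈ patterns L M, f σ := hcount
      _ ≤ #(patterns L M) * f σ := sum_le_card_nsmul _ _ _ hmax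
      _ ≤ (2 * L + 2) ^ M * f σ := Nat.mul_le_mul_right _ (card_patterns_le L M)
  have hbranch : ContainsBranching L h σ X y := by
    by_contra hnot
    rw [show f σ = 0 from if_neg hnot, mul_zero] at hle
    exact hne.card_pos.not_ge hle
  exact ⟨σ, hσ, hbranch, by rwa [show f σ = patternWeight L h σ from if_pos hbranch] at hle⟩

-- Branching subsets are removed one after the other until fewer than `T` points are left.
lemma smoothNorm_mul_sum_dirac_le {M : ℕ} {μ : FinMeasure} {T g : ℝ} (hT : 0 < T) (hg : 0 ≤ g)
    (hsep : (X : Set ℝ).Pairwise fun x x' => 1 ≤ |x - x'|)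
    (hX : ↑X ⊆ Set.Ico y (y + cellWidth L h M))
    (hbranch : ∀ X', ∀ σ ∈ patterns L M, IsBranching L h σ X' y →
      T ≤ (2 * L + 2) ^ M * patternWeight L h σ → smoothNorm (μ * uniform X') ≤ g) :
    smoothNorm (μ * ∑ x ∈ X, dirac x) ≤ #X * g + T * smoothNorm μ := by
  classical
  induction X using Finset.strongInduction with
  | H X ih =>
    have hμ := smoothNorm_nonneg μ
    rcases lt_or_ge (#X : ℝ) T with hlt | hge
    · have hmass := smoothNorm_mul_sum_smul_dirac_le (s := X) (w := fun _ => 1)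
        (fun _ _ => zero_le_one) id μ
      simp only [one_smul, sum_const, nsmul_eq_mul, mul_one, id] at hmass
      nlinarith [mul_nonneg (Nat.cast_nonneg' (α := ℝ) #X) hg]
    · have hne : X.Nonempty := card_pos.1 (by exact_mod_cast hT.trans_le hge)
      obtain ⟨σ, hσ, ⟨X', hX', hX'_branching⟩, hcard⟩ := exists_containsBranching hne hsep hX
      have hgain := hbranch X' σ hσ hX'_branching (hge.trans (by exact_mod_cast hcard))
      have hpos : 0 < #X' := by
        rw [hX'_branching.card]
        positivity
      have hrest := ih (X \ X') (sdiff_ssubset hX' (card_pos.1 hpos))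
        (hsep.mono (coe_subset.2 sdiff_subset)) ((coe_subset.2 sdiff_subset).trans hX)
      have hsplit : ∑ x ∈ X, dirac x = ∑ x ∈ X \ X', dirac x + (#X' : ℝ) • uniform X' := by
        rw [← sum_sdiff hX', uniform, smul_smul, mul_inv_cancel₀ (by positivity), one_smul]
      rw [card_sdiff_of_subset hX', Nat.cast_sub (card_le_card hX')] at hrest
      calc smoothNorm (μ * ∑ x ∈ X, dirac x)
          ≤ smoothNorm (μ * ∑ x ∈ X \ X', dirac x) + #X' * smoothNorm (μ * uniform X') := by
            rw [hsplit, mul_add, mul_smul_comm, ← smoothNorm_smul (Nat.cast_nonneg _)]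
            exact smoothNorm_add_le _ _
        _ ≤ (#X - #X') * g + T * smoothNorm μ + #X' * g := by gcongr
        _ = #X * g + T * smoothNorm μ := by ring

end Counting

/-! ### Flattening -/

lemma quarter_pow_eq_exp (n : ℕ) : (1 / 4 : ℝ) ^ n = Real.exp (-(n * Real.log 4)) := by
  rw [← mul_neg, Real.exp_nat_mul, Real.exp_neg, Real.exp_log (by norm_num), one_div]

lemma exp_mul_half_pow_le {b β : ℝ} (hβ : β ≤ b) {J : ℕ}
    (hbJ : 2 * Real.log 4 ≤ J * (Real.log 4 - b)) (r : ℕ) :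
    Real.exp (β * (J * r + r : ℕ)) * (1 / 2) ^ (2 * J * r) ≤ (1 / 4) ^ r := by
  have hhalf : (1 / 2 : ℝ) ^ (2 * J * r) = (1 / 4) ^ (J * r) := by
    rw [mul_assoc, pow_mul]
    norm_num
  rw [hhalf, quarter_pow_eq_exp, quarter_pow_eq_exp, ← Real.exp_add, Real.exp_le_exp]
  have hlog : 0 < Real.log 4 := Real.log_pos (by norm_num)
  have hJ : (0 : ℝ) ≤ J := Nat.cast_nonneg J
  have hbase : β * (J + 1) - J * Real.log 4 + Real.log 4 ≤ 0 := by
    have hgap : 0 ≤ Real.log 4 - b := by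
      by_contra! hneg
      linarith [mul_nonpos_of_nonneg_of_nonpos hJ hneg.le]
    linarith [mul_le_mul_of_nonneg_right hβ (by linarith : (0 : ℝ) ≤ J + 1)]
  push_cast
  nlinarith [mul_nonneg (neg_nonneg.2 hbase) (Nat.cast_nonneg (α := ℝ) r)]

lemma mul_half_le_branchCount_mul_log {L h M : ℕ} {σ : List (Option ℕ)} {ε : ℝ} (hL : 1 ≤ L)
    (hσ : σ.length = M) (hLε : Real.log (2 * L + 2) ≤ ε * L / 4)
    (hhε : h * Real.log 4 ≤ ε * L / 4)
    (hweight : Real.exp (ε * (L * M : ℕ)) ≤ (2 * L + 2) ^ M * patternWeight L h σ) :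
    ε * M / 2 ≤ branchCount σ * Real.log 4 := by
  have hlog := Real.log_le_log (Real.exp_pos _) hweight
  rw [patternWeight, hσ, Nat.cast_pow, Real.log_exp,
    Real.log_mul (by positivity) (by positivity), Real.log_pow, Real.log_pow] at hlog
  push_cast at hlog
  have hM : (0 : ℝ) ≤ M := Nat.cast_nonneg M
  refine le_of_mul_le_mul_left ?_ (show (0 : ℝ) < L by exact_mod_cast hL)
  linarith [mul_le_mul_of_nonneg_left hLε hM, mul_le_mul_of_nonneg_right hhε hM]

lemma mul_exp_pow_mul_quarter_pow_le {C κ b : ℝ} {L M n : ℕ} (hC : 0 < C)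
    (hCL : Real.log C ≤ L * κ) (hn : 4 * κ * (L * M : ℕ) ≤ n * Real.log 4) :
    (C * Real.exp (-(b - κ) * L)) ^ M * (1 / 4) ^ n ≤ Real.exp (-(b + 2 * κ) * (L * M : ℕ)) := by
  rw [quarter_pow_eq_exp]
  nth_rw 1 [← Real.exp_log hC]
  rw [← Real.exp_add, ← Real.exp_nat_mul, ← Real.exp_add, Real.exp_le_exp]
  push_cast at hn ⊢
  linarith [mul_le_mul_of_nonneg_left hCL (Nat.cast_nonneg (α := ℝ) M)]

lemma eventually_log_two_mul_add_two_le {ε : ℝ} (hε : 0 < ε) :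
    ∀ᶠ x : ℝ in atTop, Real.log (2 * x + 2) ≤ ε * x := by
  have hlin : Tendsto (fun x : ℝ => 2 * x + 2) atTop atTop :=
    tendsto_atTop_add_const_right _ _ (tendsto_id.const_mul_atTop two_pos)
  filter_upwards [hlin.eventually (Real.isLittleO_log_id_atTop.bound (c := ε / 4) (by positivity)),
    eventually_ge_atTop 1] with x hx hx₁
  rw [id, Real.norm_eq_abs, Real.norm_of_nonneg (by linarith)] at hx
  nlinarith [le_abs_self (Real.log (2 * x + 2))]

section Flattening

variable {t b : ℝ}

lemma EnergyDecay.smoothNorm_le {β K : ℝ} (hE : EnergyDecay t β K) (n : ℕ) :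
    smoothNorm (levelMeasure t n 1) ≤ √K * Real.exp (-β * n / 2) := by
  rw [Real.exp_half, ← Real.sqrt_mul (by linarith [hE.1])]
  exact Real.le_sqrt_of_sq_le (hE.2 n)

/-- The property of the parameters `L`, `h` that the `4 ^ h`-fold convolution power of the uniform
measure on every branching set of depth `M` whose pattern has weight at least
`exp (ε L M) / (2 L + 2) ^ M` improves the decay exponent of the energy from `b` to `b + η`. -/
def FlattensBranching (t b ε η : ℝ) (L h : ℕ) : Prop :=
  ∀ (M : ℕ) (X : Finset ℝ) (y : ℝ), ∀ σ ∈ patterns L M, IsBranching L h σ X y →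
    Real.exp (ε * (L * M : ℕ)) ≤ (2 * L + 2) ^ M * patternWeight L h σ →
    smoothNorm (uniform X ^ 4 ^ h * levelMeasure t (L * M) 1) ^ 2 ≤
      Real.exp (-(b + η) * (L * M : ℕ))

lemma exists_flattensBranching (ht₀ : 0 ≤ t) (ht₁ : t ≤ 1) (hb : b < Real.log 4)
    (hdecay : ∀ κ > 0, ∃ K, EnergyDecay t (b - κ) K) {ε : ℝ} (hε : 0 < ε) :
    ∃ L h : ℕ, 1 ≤ L ∧ ∃ η > 0, FlattensBranching t b ε η L h := by
  obtain ⟨J, hJ⟩ := exists_nat_ge (max 1 (2 * Real.log 4 / (Real.log 4 - b)))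
  have hJ₁ : 1 ≤ J := by exact_mod_cast (le_max_left _ _).trans hJ
  have hbJ := (div_le_iff₀ (sub_pos.2 hb)).1 ((le_max_right _ _).trans hJ)
  obtain ⟨Q, hQ⟩ := exists_nat_ge (max 1 (8 * J * Real.log 4 / ε))
  have hQ₁ : 1 ≤ Q := by exact_mod_cast (le_max_left _ _).trans hQ
  have hQε := (div_le_iff₀ hε).1 ((le_max_right _ _).trans hQ)
  set κ := ε / (8 * Q) with hκ_def
  have hκ : 0 < κ := by positivity
  obtain ⟨K, hE⟩ := hdecay κ hκ
  have hK : 0 < 90000 * K ^ 2 := by nlinarith [hE.1]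
  have hlarge : ∀ᶠ r : ℕ in atTop, 1 ≤ r ∧
      Real.log (2 * (Q * r : ℕ) + 2) ≤ ε / 4 * (Q * r : ℕ) ∧
      Real.log (90000 * K ^ 2) ≤ (Q * r : ℕ) * κ := by
    have htendsto : Tendsto (fun r : ℕ => ((Q * r : ℕ) : ℝ)) atTop atTop :=
      tendsto_natCast_atTop_atTop.comp (tendsto_id.const_mul_atTop' hQ₁)
    exact (eventually_ge_atTop 1).and
      ((htendsto.eventually (eventually_log_two_mul_add_two_le (by positivity))).and
        ((htendsto.atTop_mul_const hκ).eventually_ge_atTop _))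
  obtain ⟨r, hr₁, hLε, hLκ⟩ := hlarge.exists
  have hL : 1 ≤ Q * r := Nat.mul_pos hQ₁ hr₁
  have hJr : r ≤ J * r := Nat.le_mul_of_pos_left _ hJ₁
  refine ⟨Q * r, 2 * J * r, hL, 2 * κ, by positivity, fun M X y σ hσ hX hweight => ?_⟩
  have hlen := length_of_mem_patterns hσ
  have hcount := mul_half_le_branchCount_mul_log hL hlen (by linarith) (by
    push_cast
    nlinarith [mul_le_mul_of_nonneg_right hQε (Nat.cast_nonneg (α := ℝ) r)]) hweight
  have hexponent : 4 * κ * (Q * r * M : ℕ) ≤ (r * branchCount σ : ℕ) * Real.log 4 := by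
    have hscale : 4 * κ * (Q * r * M : ℕ) = r * (ε * M / 2) := by
      rw [hκ_def]
      push_cast
      field_simp
      ring
    rw [hscale, Nat.cast_mul, mul_assoc]
    gcongr
  have hpower := hE.smoothNorm_mul_prod_uniform_sq_le (ι := Fin (4 ^ (2 * J * r))) ht₀ ht₁
    (by rw [mul_assoc]; omega) (by ring) (by rw [mul_assoc]; omega)
    (exp_mul_half_pow_le (sub_le_self b hκ.le) hbJ r) (Fintype.card_fin _) fun _ => hX
  rw [prod_const, card_univ, Fintype.card_fin, hlen, mul_comm] at hpower
  exact hpower.trans (mul_exp_pow_mul_quarter_pow_le hK hLκ hexponent)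

-- Log-convexity of `k ↦ ‖ρ ^ k * μ‖` brings the gain of the `k`-th power back to `ρ` itself.
lemma EnergyDecay.smoothNorm_mul_le_of_pow {κ K η : ℝ} (hE : EnergyDecay t (b - κ) K) (hκ : 0 ≤ κ)
    {k n : ℕ} (hk : k ≠ 0) (hη : κ * (2 * k) ≤ η) {ρ : FinMeasure}
    (hρ : smoothNorm (ρ ^ k * levelMeasure t n 1) ^ 2 ≤ Real.exp (-(b + η) * n)) :
    smoothNorm (levelMeasure t n 1 * ρ) ≤ √K * Real.exp (-(b + κ) * n / 2) := by
  obtain ⟨k, rfl⟩ := Nat.exists_eq_succ_of_ne_zero hk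
  set μ := levelMeasure t n 1
  have hpow : smoothNorm (ρ ^ (k + 1) * μ) ≤ Real.exp (-(b + η) * n / 2) := by
    rw [Real.exp_half]
    exact Real.le_sqrt_of_sq_le hρ
  rw [mul_comm]
  refine (pow_le_pow_iff_left₀ (smoothNorm_nonneg _) (by positivity) hk).1 ?_
  calc smoothNorm (ρ * μ) ^ (k + 1)
      ≤ smoothNorm μ ^ k * smoothNorm (ρ ^ (k + 1) * μ) := smoothNorm_mul_pow_le μ ρ k
    _ ≤ (√K * Real.exp (-(b - κ) * n / 2)) ^ k * Real.exp (-(b + η) * n / 2) :=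
        mul_le_mul (pow_le_pow_left₀ (smoothNorm_nonneg _) (hE.smoothNorm_le n) _) hpow
          (smoothNorm_nonneg _) (by positivity)
    _ = √K ^ k * Real.exp (k * (-(b - κ) * n / 2) + -(b + η) * n / 2) := by
        rw [mul_pow, ← Real.exp_nat_mul, mul_assoc, ← Real.exp_add]
    _ ≤ √K ^ (k + 1) * Real.exp ((k + 1 : ℕ) * (-(b + κ) * n / 2)) := by
        have hK : 1 ≤ √K := Real.one_le_sqrt.2 hE.1
        gcongr ?_ * Real.exp ?_
        · exact pow_le_pow_right₀ hK k.le_succ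
        · push_cast at hη ⊢
          nlinarith [mul_le_mul_of_nonneg_right hη (Nat.cast_nonneg (α := ℝ) n),
            mul_nonneg hκ (Nat.cast_nonneg (α := ℝ) n)]
    _ = (√K * Real.exp (-(b + κ) * n / 2)) ^ (k + 1) := by rw [mul_pow, ← Real.exp_nat_mul]

lemma FlattensBranching.smoothNorm_mul_sum_dirac_le {ε η : ℝ} {L h : ℕ}
    (hflat : FlattensBranching t b ε η L h) {κ K : ℝ} (hκ : 0 ≤ κ) (hκη : κ * (2 * 4 ^ h) ≤ η)
    (hE : EnergyDecay t (b - κ) K) {M : ℕ} {X : Finset ℝ} {y : ℝ}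
    (hsep : (X : Set ℝ).Pairwise fun x x' => 1 ≤ |x - x'|)
    (hX : ↑X ⊆ Set.Ico y (y + cellWidth L h M)) :
    smoothNorm (levelMeasure t (L * M) 1 * ∑ x ∈ X, dirac x) ≤
      #X * (√K * Real.exp (-(b + κ) * (L * M : ℕ) / 2)) +
        Real.exp (ε * (L * M : ℕ)) * (√K * Real.exp (-(b - κ) * (L * M : ℕ) / 2)) := by
  refine (CornerCantor.smoothNorm_mul_sum_dirac_le (Real.exp_pos (ε * (L * M : ℕ))) (by positivity)
    hsep hX fun X' σ hσ hX' hweight => hE.smoothNorm_mul_le_of_pow hκ (k := 4 ^ h) (by positivity)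
      (by exact_mod_cast hκη) (hflat M X' y σ hσ hX' hweight)).trans ?_
  gcongr
  exact hE.smoothNorm_le _

end Flattening

/-! ### Good Diophantine scales -/

section Diophantine

variable {t : ℝ}

lemma ne_zero_of_abs_add_mul_lt_one {a b : ℤ} (hab : a ≠ 0 ∨ b ≠ 0) (h : |a + t * b| < 1) :
    b ≠ 0 := by
  rintro rfl
  rw [Int.cast_zero, mul_zero, add_zero] at h
  have ha : a = 0 := Int.abs_lt_one_iff.1 (by exact_mod_cast h)
  exact hab.elim (· ha) (· rfl)

lemma mul_eq_mul_of_abs_add_mul_lt_one {a b a' b' : ℤ}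
    (h : |a + t * b| * |(b' : ℝ)| + |a' + t * b'| * |(b : ℝ)| < 1) : a * b' = a' * b := by
  have hdet : |((a * b' - a' * b : ℤ) : ℝ)| < 1 :=
    calc |((a * b' - a' * b : ℤ) : ℝ)|
        = |(a + t * b) * b' - (a' + t * b') * b| := by
          congr 1
          push_cast
          ring
      _ ≤ |(a + t * b) * b'| + |(a' + t * b') * b| := abs_sub _ _
      _ < 1 := by rwa [abs_mul, abs_mul]
  exact sub_eq_zero.1 (Int.abs_lt_one_iff.1 (by exact_mod_cast hdet))

lemma mul_zero_eq_zero_mul_of_consecutive {a b : ℕ → ℤ} (hb : ∀ i, b i ≠ 0)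
    (h : ∀ i, a i * b (i + 1) = a (i + 1) * b i) (i : ℕ) : a i * b 0 = a 0 * b i := by
  induction i with
  | zero => rfl
  | succ i ih => exact mul_left_cancel₀ (hb i) (by linear_combination b (i + 1) * ih - b 0 * h i)

lemma abs_add_mul_le_of_mul_eq_mul {a b a₀ b₀ : ℤ} (hb : b ≠ 0) (h : a * b₀ = a₀ * b) :
    |a₀ + t * b₀| ≤ |a + t * b| * |(b₀ : ℝ)| := by
  have hb_one : 1 ≤ |(b : ℝ)| := by exact_mod_cast Int.one_le_abs hb
  have h : (a : ℝ) * b₀ = a₀ * b := by exact_mod_cast h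
  calc |a₀ + t * b₀| ≤ |a₀ + t * b₀| * |(b : ℝ)| := le_mul_of_one_le_right (abs_nonneg _) hb_one
    _ = |a + t * b| * |(b₀ : ℝ)| := by
      rw [← abs_mul, ← abs_mul]
      congr 1
      linear_combination -h

lemma quarter_pow_mul_add_quarter_pow_mul_lt_one {n : ℕ} (hn : 2 ≤ n) {B B' : ℝ}
    (hB : B ≤ 4 ^ n) (hB' : B' ≤ 4 ^ (n + 1)) :
    (1 / 4 : ℝ) ^ (3 * n) * B' + (1 / 4 : ℝ) ^ (3 * (n + 1)) * B < 1 := by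
  have hscale : (1 / 4 : ℝ) ^ n * 4 ^ n = 1 := by rw [← mul_pow]; norm_num
  have hsmall : (1 / 4 : ℝ) ^ n ≤ 1 / 16 :=
    (pow_le_pow_of_le_one (by norm_num) (by norm_num) hn).trans (by norm_num)
  calc (1 / 4 : ℝ) ^ (3 * n) * B' + (1 / 4 : ℝ) ^ (3 * (n + 1)) * B
      ≤ (1 / 4 : ℝ) ^ (3 * n) * 4 ^ (n + 1) + (1 / 4 : ℝ) ^ (3 * (n + 1)) * 4 ^ n := by gcongr
    _ = ((1 / 4 : ℝ) ^ n) ^ 2 * ((1 / 4 : ℝ) ^ n * 4 ^ n) * (4 + (1 / 4) ^ 3) := by ring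
    _ ≤ (1 / 16) ^ 2 * 1 * (4 + (1 / 4) ^ 3) := by rw [hscale]; gcongr
    _ < 1 := by norm_num

-- Solutions of `|a + t b| < 4 ^ (-3 n)` at two consecutive scales are proportional. If they
-- existed at all large scales, all of them would be proportional to a single pair `(a₀, b₀)`, and
-- `a₀ + t b₀` would vanish.
lemma exists_quarter_pow_le_abs_add_mul (ht : Irrational t) (n₀ : ℕ) :
    ∃ n ≥ n₀, ∀ a b : ℤ, |(a : ℝ)| ≤ 4 ^ n → |(b : ℝ)| ≤ 4 ^ n → (a ≠ 0 ∨ b ≠ 0) →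
      (1 / 4 : ℝ) ^ (3 * n) ≤ |a + t * b| := by
  by_contra! hcon
  choose a b _ hb hab hsmall using fun i => hcon (n₀ + 2 + i) (by omega)
  have hb_ne : ∀ i, b i ≠ 0 := fun i => ne_zero_of_abs_add_mul_lt_one (hab i)
    ((hsmall i).trans_le (pow_le_one₀ (by norm_num) (by norm_num)))
  have hcross : ∀ i, a i * b (i + 1) = a (i + 1) * b i := fun i =>
    mul_eq_mul_of_abs_add_mul_lt_one <| (add_le_add
      (mul_le_mul_of_nonneg_right (hsmall i).le (abs_nonneg _))
      (mul_le_mul_of_nonneg_right (hsmall (i + 1)).le (abs_nonneg _))).trans_lt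
      (quarter_pow_mul_add_quarter_pow_mul_lt_one (by omega) (hb i) (hb (i + 1)))
  have hdecay : Tendsto (fun i : ℕ => (1 / 4 : ℝ) ^ i * |(b 0 : ℝ)|) atTop (𝓝 0) := by
    simpa using (tendsto_pow_atTop_nhds_zero_of_lt_one (r := (1 / 4 : ℝ)) (by norm_num)
      (by norm_num)).mul_const |(b 0 : ℝ)|
  have hzero : |a 0 + t * b 0| ≤ 0 := ge_of_tendsto' hdecay fun i =>
    calc |a 0 + t * b 0| ≤ |a i + t * b i| * |(b 0 : ℝ)| :=
          abs_add_mul_le_of_mul_eq_mul (hb_ne i)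
            (mul_zero_eq_zero_mul_of_consecutive hb_ne hcross i)
      _ ≤ (1 / 4 : ℝ) ^ i * |(b 0 : ℝ)| := by
          gcongr
          exact (hsmall i).le.trans
            (pow_le_pow_of_le_one (by norm_num) (by norm_num) (by omega))
  exact ((ht.mul_intCast (hb_ne 0)).intCast_add (a 0)).ne_zero (abs_nonpos_iff.1 hzero)

end Diophantine

/-! ### Maximal decay of the energy -/

section CellDecomposition

variable {X : Finset ℝ} {y : ℝ}

lemma card_filter_abs_sub_lt_le (s : Finset ℕ) (c k : ℕ) :
    #{c' ∈ s | |(c : ℝ) - (c' : ℕ)| < k} ≤ 2 * k := by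
  calc #{c' ∈ s | |(c : ℝ) - (c' : ℕ)| < k} ≤ #(Ico (c + 1 - k) (c + k)) := by
        refine card_le_card fun c' hc' => ?_
        obtain ⟨hupp, hlow⟩ := abs_lt.1 (mem_filter.1 hc').2
        have hupp : c' < c + k := by exact_mod_cast (by linarith : (c' : ℝ) < c + k)
        have hlow : c < c' + k := by exact_mod_cast (by linarith : (c : ℝ) < c' + k)
        exact mem_Ico.2 ⟨by omega, hupp⟩
    _ ≤ 2 * k := by
        rw [Nat.card_Ico]
        omega

lemma sum_card_cell_sq_le {N : ℕ} {w W : ℝ} (hw : 0 < w) (hwW : w ≤ W)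
    (hX : ↑X ⊆ Set.Ico y (y + N * w)) :
    ∑ c ∈ range N, (#(cell X y w c) : ℝ) ^ 2 ≤
      9 * smoothNorm (∑ x ∈ X, dirac (x / W)) ^ 2 := by
  have hcollision := collision_le_smoothNorm_sq (s := X) (w := fun _ => 1)
    (fun _ _ => zero_le_one) id (hw.trans_le hwW)
  simp only [one_smul, id] at hcollision
  refine le_trans ?_ hcollision
  rw [collision, ← sum_cell hw hX]
  refine sum_le_sum fun c _ => ?_
  rw [sq, ← nsmul_eq_mul, ← sum_const]
  refine sum_le_sum fun x hx => ?_
  rw [mul_one, ← sum_filter, sum_const, nsmul_one, Nat.cast_le]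
  refine card_le_card fun x' hx' => mem_filter.2 ⟨cell_subset X y w c hx', abs_lt.2 ?_⟩
  obtain ⟨hlow, hupp⟩ := mem_Ico_of_mem_cell hx
  obtain ⟨hlow', hupp'⟩ := mem_Ico_of_mem_cell hx'
  constructor <;> simp only [id] <;> linarith

lemma smoothNorm_mul_sum_dirac_sq_le_sum_cell {μ : FinMeasure} {W : ℝ} (hW : 1 ≤ W)
    (hμ : μ ∈ supportedIn (Set.Icc 0 W)) {H N : ℕ} (hH : 0 < H)
    (hX : ↑X ⊆ Set.Ico y (y + N * (W / H))) :
    smoothNorm (μ * ∑ x ∈ X, dirac x) ^ 2 ≤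
      6 * H * ∑ c ∈ range N, smoothNorm (μ * ∑ x ∈ cell X y (W / H) c, dirac x) ^ 2 := by
  have hH_one : (1 : ℝ) ≤ H := by exact_mod_cast hH
  have hw : 0 < W / H := by positivity
  have hwW : W / H ≤ W := div_le_self (by linarith) hH_one
  have hsupp : ∀ c ∈ range N, μ * ∑ x ∈ cell X y (W / H) c, dirac x ∈
      supportedIn (Set.Icc (y + c * (W / H)) (y + c * (W / H) + 2 * W)) := fun c _ =>
    supportedIn_mono (Set.Icc_subset_Icc (by linarith) (by linarith)) <|
      mul_mem_supportedIn_Icc hμ <| Submodule.sum_mem _ fun x hx => dirac_mem_supportedIn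
        (Set.Ico_subset_Icc_self (mem_Ico_of_mem_cell hx))
  have hnear : ∀ c ∈ range N,
      #{c' ∈ range N | |(y + c * (W / H)) - (y + (c' : ℕ) * (W / H))| < 3 * W} ≤ 2 * (3 * H) := by
    intro c _
    refine (card_le_card (monotone_filter_right _ fun c' _ h => ?_)).trans
      (card_filter_abs_sub_lt_le (range N) c (3 * H))
    have hfactor : (y + c * (W / H)) - (y + c' * (W / H)) = ((c : ℝ) - c') * (W / H) := by ring
    have hthree : 3 * W = 3 * H * (W / H) := by field_simp
    rw [hfactor, abs_mul, abs_of_pos hw, hthree] at h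
    exact_mod_cast lt_of_mul_lt_mul_right h hw.le
  rw [← sum_cell hw hX, mul_sum]
  refine ((smoothNorm_sum_sq_le_collision hW hsupp).trans
    (collision_le_card_mul_sum_sq hnear)).trans_eq ?_
  push_cast
  ring

-- The error `B₂` is only paid on the nonempty cells, of which there are at most `#X`.
lemma smoothNorm_mul_sum_dirac_sq_le_of_cell {μ : FinMeasure} {W B₁ B₂ : ℝ} (hW : 1 ≤ W)
    (hμ : μ ∈ supportedIn (Set.Icc 0 W)) {H N : ℕ} (hH : 0 < H)
    (hX : ↑X ⊆ Set.Ico y (y + N * (W / H)))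
    (hB : ∀ c, smoothNorm (μ * ∑ x ∈ cell X y (W / H) c, dirac x) ≤
      #(cell X y (W / H) c) * B₁ + B₂) :
    smoothNorm (μ * ∑ x ∈ X, dirac x) ^ 2 ≤
      12 * H * (9 * B₁ ^ 2 * smoothNorm (∑ x ∈ X, dirac (x / W)) ^ 2 + B₂ ^ 2 * #X) := by
  have hw : 0 < W / H := by positivity
  have hcell : ∀ c, smoothNorm (μ * ∑ x ∈ cell X y (W / H) c, dirac x) ^ 2 ≤
      2 * (B₁ ^ 2 * #(cell X y (W / H) c) ^ 2 + B₂ ^ 2 * #(cell X y (W / H) c)) := by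
    intro c
    rcases (cell X y (W / H) c).eq_empty_or_nonempty with hempty | hne
    · simp [hempty, smoothNorm]
    · have hone : (1 : ℝ) ≤ #(cell X y (W / H) c) := by exact_mod_cast hne.card_pos
      have hsq := pow_le_pow_left₀ (smoothNorm_nonneg _) (hB c) 2
      have hB₂ := le_mul_of_one_le_right (sq_nonneg B₂) hone
      linarith [add_sq_le (a := #(cell X y (W / H) c) * B₁) (b := B₂)]
  have hcard : ∑ c ∈ range N, (#(cell X y (W / H) c) : ℝ) = #X := by
    exact_mod_cast sum_card_cell hw hX
  calc smoothNorm (μ * ∑ x ∈ X, dirac x) ^ 2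
      ≤ 6 * H * ∑ c ∈ range N, smoothNorm (μ * ∑ x ∈ cell X y (W / H) c, dirac x) ^ 2 :=
        smoothNorm_mul_sum_dirac_sq_le_sum_cell hW hμ hH hX
    _ ≤ 6 * H * ∑ c ∈ range N,
          2 * (B₁ ^ 2 * #(cell X y (W / H) c) ^ 2 + B₂ ^ 2 * #(cell X y (W / H) c)) := by
        gcongr with c
        exact hcell c
    _ = 12 * H * (B₁ ^ 2 * ∑ c ∈ range N, (#(cell X y (W / H) c) : ℝ) ^ 2 + B₂ ^ 2 * #X) := by
        rw [← mul_sum, sum_add_distrib, ← mul_sum, ← mul_sum, hcard]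
        ring
    _ ≤ 12 * H * (B₁ ^ 2 * (9 * smoothNorm (∑ x ∈ X, dirac (x / W)) ^ 2) + B₂ ^ 2 * #X) := by
        gcongr
        exact sum_card_cell_sq_le hw (div_le_self (by linarith) (by exact_mod_cast hH)) hX
    _ = _ := by ring

end CellDecomposition

section Decay

variable {t : ℝ}

/-- The set of the points `c (a + t b)`, with `a` and `b` having `n` base-four digits in `{0, 1}`;
`levelMeasure t n c` is the uniform measure on them when they are distinct. -/
noncomputable def levelPoints (t : ℝ) (n : ℕ) (c : ℝ) : Finset ℝ :=
  (zeroOneNat n ×ˢ zeroOneNat n).image fun q => c * (q.1 + t * q.2)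

lemma levelPoints_subset (ht₀ : 0 ≤ t) (ht₁ : t ≤ 1) (n : ℕ) {c : ℝ} (hc : 0 < c) :
    ↑(levelPoints t n c) ⊆ Set.Ico 0 (c * 4 ^ n) := by
  intro x hx
  obtain ⟨q, hq, rfl⟩ := mem_image.1 (mem_coe.1 hx)
  obtain ⟨ha, hb⟩ := mem_product.1 hq
  have ha : 3 * (q.1 : ℝ) + 1 ≤ 4 ^ n := mod_cast three_mul_add_one_le_of_mem_zeroOneNat _ ha
  have hb : 3 * (q.2 : ℝ) + 1 ≤ 4 ^ n := mod_cast three_mul_add_one_le_of_mem_zeroOneNat _ hb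
  have htb : t * q.2 ≤ q.2 := mul_le_of_le_one_left (Nat.cast_nonneg _) ht₁
  exact ⟨by positivity, mul_lt_mul_of_pos_left (by linarith) hc⟩

/-- Distinct points of level `n` are at distance at least `1` after scaling by `c`. -/
def LevelSeparated (t : ℝ) (n : ℕ) (c : ℝ) : Prop :=
  (↑(zeroOneNat n ×ˢ zeroOneNat n) : Set (ℕ × ℕ)).Pairwise fun q q' =>
    1 ≤ |c * (q.1 + t * q.2) - c * (q'.1 + t * q'.2)|

lemma LevelSeparated.injOn {n : ℕ} {c : ℝ} (h : LevelSeparated t n c) :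
    Set.InjOn (fun q : ℕ × ℕ => c * (q.1 + t * q.2)) ↑(zeroOneNat n ×ˢ zeroOneNat n) := by
  intro q hq q' hq' heq
  by_contra hne
  have := h hq hq' hne
  simp only at heq
  norm_num [heq] at this

lemma LevelSeparated.card_levelPoints {n : ℕ} {c : ℝ} (h : LevelSeparated t n c) :
    #(levelPoints t n c) = 4 ^ n := by
  rw [levelPoints, card_image_of_injOn h.injOn, card_product, card_zeroOneNat, ← mul_pow]
  norm_num

lemma LevelSeparated.pairwise_levelPoints {n : ℕ} {c : ℝ} (h : LevelSeparated t n c) :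
    (levelPoints t n c : Set ℝ).Pairwise fun x x' => 1 ≤ |x - x'| := by
  intro x hx x' hx' hne
  obtain ⟨q, hq, rfl⟩ := mem_image.1 (mem_coe.1 hx)
  obtain ⟨q', hq', rfl⟩ := mem_image.1 (mem_coe.1 hx')
  exact h hq hq' fun heq => hne (by rw [heq])

lemma LevelSeparated.levelMeasure_eq {n : ℕ} {c : ℝ} (h : LevelSeparated t n c) (r : ℝ) :
    levelMeasure t n (r * c) = (1 / 4 : ℝ) ^ n • ∑ x ∈ levelPoints t n c, dirac (r * x) := by
  rw [levelMeasure_eq_sum, levelPoints, sum_image h.injOn, smul_sum]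
  simp only [mul_assoc]

lemma LevelSeparated.energy_eq {n : ℕ} {c : ℝ} (h : LevelSeparated t n c) (hc : c ≠ 0) :
    energy t n = ((1 / 4) ^ n) ^ 2 * smoothNorm (∑ x ∈ levelPoints t n c, dirac (x / c)) ^ 2 := by
  have hlevel := h.levelMeasure_eq c⁻¹
  simp only [inv_mul_cancel₀ hc, ← div_eq_inv_mul] at hlevel
  rw [energy, hlevel, smoothNorm_smul (by positivity), mul_pow]

lemma LevelSeparated.energy_add_eq {n N : ℕ} (h : LevelSeparated t n (4 ^ N)) :
    energy t (n + N) = ((1 / 4) ^ n) ^ 2 *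
      smoothNorm (levelMeasure t N 1 * ∑ x ∈ levelPoints t n (4 ^ N), dirac x) ^ 2 := by
  have hlevel := h.levelMeasure_eq 1
  simp only [one_mul] at hlevel
  rw [energy, add_comm, levelMeasure_add, one_mul, hlevel, mul_smul_comm,
    smoothNorm_smul (by positivity), mul_pow]

lemma levelSeparated_of_quarter_pow_le {n N : ℕ} (hN : 3 * n ≤ N)
    (h : ∀ a b : ℤ, |(a : ℝ)| ≤ 4 ^ n → |(b : ℝ)| ≤ 4 ^ n → (a ≠ 0 ∨ b ≠ 0) →
      (1 / 4 : ℝ) ^ (3 * n) ≤ |a + t * b|) : LevelSeparated t n (4 ^ N) := by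
  have hsub : ∀ a ∈ zeroOneNat n, ∀ b ∈ zeroOneNat n, |(((a : ℤ) - b : ℤ) : ℝ)| ≤ 4 ^ n := by
    intro a ha b hb
    have ha := three_mul_add_one_le_of_mem_zeroOneNat _ ha
    have hb := three_mul_add_one_le_of_mem_zeroOneNat _ hb
    exact_mod_cast (abs_le.2 ⟨by omega, by omega⟩ : |(a : ℤ) - b| ≤ ((4 ^ n : ℕ) : ℤ))
  intro q hq q' hq' hne
  obtain ⟨hq₁, hq₂⟩ := mem_product.1 (mem_coe.1 hq)
  obtain ⟨hq₁', hq₂'⟩ := mem_product.1 (mem_coe.1 hq')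
  have hgap := h (q.1 - q'.1) (q.2 - q'.2) (hsub _ hq₁ _ hq₁') (hsub _ hq₂ _ hq₂') (by
    contrapose! hne
    ext <;> omega)
  calc (1 : ℝ) = 4 ^ (3 * n) * (1 / 4) ^ (3 * n) := by rw [← mul_pow]; norm_num
    _ ≤ 4 ^ N * |((q.1 - q'.1 : ℤ) : ℝ) + t * ((q.2 - q'.2 : ℤ) : ℝ)| := by
        gcongr
        norm_num
    _ = |4 ^ N * (q.1 + t * q.2) - 4 ^ N * (q'.1 + t * q'.2)| := by
        rw [← abs_of_pos (by positivity : (0 : ℝ) < 4 ^ N), ← abs_mul]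
        congr 1
        push_cast
        simp only [abs_pow, Nat.abs_ofNat]
        ring

lemma LevelSeparated.energy_add_le (ht₀ : 0 ≤ t) (ht₁ : t ≤ 1) {n L h M : ℕ} {B₁ B₂ : ℝ}
    (hsep : LevelSeparated t n (4 ^ (L * M)))
    (hB : ∀ (X : Finset ℝ) (y : ℝ), (X : Set ℝ).Pairwise (fun x x' => 1 ≤ |x - x'|) →
      ↑X ⊆ Set.Ico y (y + cellWidth L h M) →
      smoothNorm (levelMeasure t (L * M) 1 * ∑ x ∈ X, dirac x) ≤ #X * B₁ + B₂) :
    energy t (n + L * M) ≤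
      12 * 4 ^ h * (9 * B₁ ^ 2 * energy t n + B₂ ^ 2 * (1 / 4) ^ n) := by
  set W : ℝ := 4 ^ (L * M)
  set X := levelPoints t n W
  have hW : 1 ≤ W := one_le_pow₀ (by norm_num)
  have hwidth : cellWidth L h M = W / (4 ^ h : ℕ) := by
    rw [cellWidth]
    push_cast
    rfl
  have hX : ↑X ⊆ Set.Ico 0 (0 + (4 ^ n * 4 ^ h : ℕ) * (W / (4 ^ h : ℕ))) := by
    convert levelPoints_subset ht₀ ht₁ n (by positivity : 0 < W) using 2
    push_cast
    field_simp
    ring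
  have hsupp : levelMeasure t (L * M) 1 ∈ supportedIn (Set.Icc 0 W) := by
    simpa only [one_mul] using levelMeasure_mem_supportedIn ht₀ ht₁ (L * M) zero_le_one
  have hcells := smoothNorm_mul_sum_dirac_sq_le_of_cell hW hsupp (by positivity : 0 < 4 ^ h) hX
    fun c => hB _ _ (hsep.pairwise_levelPoints.mono (by exact_mod_cast cell_subset X _ _ c))
      fun x hx => by simpa only [hwidth] using mem_Ico_of_mem_cell hx
  have hmass : (1 / 4 : ℝ) ^ n * #X = 1 := by
    rw [hsep.card_levelPoints, Nat.cast_pow, ← mul_pow]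
    norm_num
  rw [hsep.energy_add_eq, hsep.energy_eq (by positivity)]
  push_cast at hcells
  calc ((1 / 4 : ℝ) ^ n) ^ 2 * smoothNorm (levelMeasure t (L * M) 1 * ∑ x ∈ X, dirac x) ^ 2
      ≤ ((1 / 4 : ℝ) ^ n) ^ 2 * (12 * 4 ^ h *
          (9 * B₁ ^ 2 * smoothNorm (∑ x ∈ X, dirac (x / W)) ^ 2 + B₂ ^ 2 * #X)) := by gcongr
    _ = _ := by linear_combination 12 * 4 ^ h * B₂ ^ 2 * (1 / 4) ^ n * hmass

lemma sq_sqrt_mul_exp_half {K : ℝ} (hK : 0 ≤ K) (x : ℝ) :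
    (√K * Real.exp (x / 2)) ^ 2 = K * Real.exp x := by
  rw [Real.exp_half, ← Real.sqrt_mul hK, Real.sq_sqrt (by positivity)]

lemma EnergyDecay.exp_mul_energy_le {b κ K : ℝ} (hE : EnergyDecay t (b - κ) K) (hκ : 0 ≤ κ)
    {n N : ℕ} (hN : 3 * n ≤ N) :
    Real.exp (-(b + κ) * N) * energy t n ≤ K * Real.exp (-b * (n + N : ℕ) - 2 * κ * n) := by
  have hN : 3 * (n : ℝ) ≤ N := mod_cast hN
  have hK : 0 ≤ K := zero_le_one.trans hE.1
  calc Real.exp (-(b + κ) * N) * energy t n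
      ≤ Real.exp (-(b + κ) * N) * (K * Real.exp (-(b - κ) * n)) := by
        gcongr
        exact hE.2 n
    _ = K * Real.exp (-(b + κ) * N + -(b - κ) * n) := by rw [Real.exp_add, mul_left_comm]
    _ ≤ K * Real.exp (-b * (n + N : ℕ) - 2 * κ * n) := by
        gcongr
        push_cast
        nlinarith

lemma exp_mul_exp_mul_quarter_pow_le {b ε κ : ℝ} (hκ : 0 ≤ κ) (hε : 0 ≤ ε)
    (hgap : 8 * ε + 6 * κ ≤ Real.log 4 - b) {n N : ℕ} (hN : N ≤ 4 * n) :
    Real.exp (2 * (ε * N)) * Real.exp (-(b - κ) * N) * (1 / 4) ^ n ≤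
      Real.exp (-b * (n + N : ℕ) - 2 * κ * n) := by
  have hN : (N : ℝ) ≤ 4 * n := mod_cast hN
  rw [quarter_pow_eq_exp, ← Real.exp_add, ← Real.exp_add, Real.exp_le_exp]
  push_cast
  nlinarith [mul_le_mul_of_nonneg_left hN hε, mul_le_mul_of_nonneg_left hN hκ]

lemma FlattensBranching.exp_le_of_levelSeparated (ht₀ : 0 ≤ t) (ht₁ : t ≤ 1)
    {b ε η κ K : ℝ} {L h : ℕ} (hflat : FlattensBranching t b ε η L h) (hκ : 0 ≤ κ)
    (hκη : κ * (2 * 4 ^ h) ≤ η) (hE : EnergyDecay t (b - κ) K)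
    (hlow : ∀ n : ℕ, Real.exp (-b * n) ≤ 9 * energy t n) (hε : 0 ≤ ε)
    (hgap : 8 * ε + 6 * κ ≤ Real.log 4 - b) {n M : ℕ}
    (hsep : LevelSeparated t n (4 ^ (L * M))) (hN : 3 * n ≤ L * M) (hN' : L * M ≤ 4 * n) :
    Real.exp (2 * κ * n) ≤ 1080 * 4 ^ h * K ^ 2 := by
  have hK : 0 ≤ K := zero_le_one.trans hE.1
  have hupp := hsep.energy_add_le ht₀ ht₁ fun X y hX hXy =>
    hflat.smoothNorm_mul_sum_dirac_le hκ hκη hE hX hXy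
  rw [mul_pow (Real.exp _), sq_sqrt_mul_exp_half hK, sq_sqrt_mul_exp_half hK,
    ← Real.exp_nat_mul, Nat.cast_ofNat] at hupp
  set N := L * M
  set Z := Real.exp (-b * (n + N : ℕ) - 2 * κ * n) with hZ
  have hmain : Real.exp (-(b + κ) * N) * energy t n ≤ K * Z := hE.exp_mul_energy_le hκ hN
  have herror : Real.exp (2 * (ε * N)) * Real.exp (-(b - κ) * N) * (1 / 4) ^ n ≤ K * Z :=
    (exp_mul_exp_mul_quarter_pow_le hκ hε hgap hN').trans
      (le_mul_of_one_le_left (Real.exp_pos _).le hE.1)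
  refine le_of_mul_le_mul_right ?_ (Real.exp_pos _ : 0 < Z)
  calc Real.exp (2 * κ * n) * Z = Real.exp (-b * (n + N : ℕ)) := by
        rw [hZ, ← Real.exp_add]
        ring_nf
    _ ≤ 9 * energy t (n + N) := hlow _
    _ ≤ 108 * 4 ^ h * K * (9 * (Real.exp (-(b + κ) * N) * energy t n) +
          Real.exp (2 * (ε * N)) * Real.exp (-(b - κ) * N) * (1 / 4) ^ n) := by
        linarith
    _ ≤ 108 * 4 ^ h * K * (9 * (K * Z) + K * Z) := by gcongr
    _ = 1080 * 4 ^ h * K ^ 2 * Z := by ring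

theorem energyDecay_of_irrational (ht₀ : 0 ≤ t) (ht₁ : t ≤ 1) (ht : Irrational t) {κ : ℝ}
    (hκ : 0 < κ) : ∃ K, EnergyDecay t (Real.log 4 - κ) K := by
  obtain ⟨b, -, hb, hlow, hdecay⟩ := exists_energy_exponent ht₀ ht₁
  rcases hb.eq_or_lt with rfl | hb
  · exact hdecay κ hκ
  exfalso
  obtain ⟨L, h, hL, η, hη, hflat⟩ := exists_flattensBranching ht₀ ht₁ hb hdecay
    (by linarith : 0 < (Real.log 4 - b) / 16)
  set δ := min (η / (2 * 4 ^ h)) ((Real.log 4 - b) / 12)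
  have hδ_pos : 0 < δ := lt_min (by positivity) (by linarith)
  have hδη : δ * (2 * 4 ^ h) ≤ η := (le_div_iff₀ (by positivity)).1 (min_le_left _ _)
  have hδ_gap : δ ≤ (Real.log 4 - b) / 12 := min_le_right _ _
  obtain ⟨K, hK⟩ := hdecay δ hδ_pos
  obtain ⟨n₀, hn₀⟩ : ∃ n₀ : ℕ, ∀ n ≥ n₀, 1080 * 4 ^ h * K ^ 2 < Real.exp (2 * δ * (n : ℕ)) :=
    eventually_atTop.1 <| (Real.tendsto_exp_atTop.comp <|
      tendsto_natCast_atTop_atTop.const_mul_atTop (by positivity)).eventually_gt_atTop _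
  obtain ⟨n, hn, hdio⟩ := exists_quarter_pow_le_abs_add_mul ht (n₀ + L)
  have hM := Nat.div_add_mod (3 * n) L
  have hmod := Nat.mod_lt (3 * n) hL
  have hN : 3 * n ≤ L * (3 * n / L + 1) := by
    rw [mul_add]
    omega
  exact (hn₀ n (by omega)).not_ge <| hflat.exp_le_of_levelSeparated ht₀ ht₁ hδ_pos.le hδη hK hlow
    (by linarith) (by linarith) (levelSeparated_of_quarter_pow_le hN hdio) hN
    (by rw [mul_add]; omega)

end Decay

/-! ### Separated cylinders -/

lemma sq_sum_le_card_image_floor_mul_collision {ι : Type*} {s : Finset ι} {w : ι → ℝ}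
    (hw : ∀ i ∈ s, 0 ≤ w i) (p : ι → ℝ) :
    (∑ i ∈ s, w i) ^ 2 ≤ #(s.image fun i => ⌊p i⌋) * collision s w p 1 := by
  have hmaps : ∀ i ∈ s, ⌊p i⌋ ∈ s.image fun i => ⌊p i⌋ := fun i hi => mem_image_of_mem _ hi
  rw [collision, ← sum_fiberwise_of_maps_to hmaps w,
    ← sum_fiberwise_of_maps_to hmaps fun i => ∑ j ∈ s, _]
  refine sq_sum_le_card_mul_sum_sq.trans ?_
  gcongr with c _
  rw [sq, sum_mul_sum]
  refine sum_le_sum fun i hi => ?_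
  obtain ⟨his, rfl⟩ := mem_filter.1 hi
  rw [sum_filter]
  refine sum_le_sum fun j hj => ?_
  have hwij := mul_nonneg (hw i his) (hw j hj)
  by_cases h : ⌊p j⌋ = ⌊p i⌋
  · rw [if_pos h, if_pos (Int.abs_sub_lt_one_of_floor_eq_floor h.symm)]
  · rw [if_neg h]
    split_ifs <;> simp [hwij]

lemma exists_subset_two_le_abs_sub (C : Finset ℤ) :
    ∃ E ⊆ C, (E : Set ℤ).Pairwise (fun c c' => 2 ≤ |c - c'|) ∧ #C ≤ 2 * #E := by
  have hcard := card_filter_add_card_filter_not (s := C) Even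
  have key (P : ℤ → Prop) [DecidablePred P] (hP : ∀ c c', P c → P c' → Even (c - c')) :
      (C.filter P : Set ℤ).Pairwise (fun c c' => 2 ≤ |c - c'|) := by
    intro c hc c' hc' hne
    obtain ⟨k, hk⟩ := hP c c' (mem_filter.1 hc).2 (mem_filter.1 hc').2
    rw [le_abs]
    omega
  rcases le_total #(C.filter Even) #(C.filter fun c => ¬Even c) with h | h
  · exact ⟨_, filter_subset _ _, key (fun c => ¬Even c) (fun c c' hc hc' =>
      Int.even_sub.2 (iff_of_false hc hc')), by omega⟩
  · exact ⟨_, filter_subset _ _, key Even (fun c c' hc hc' => hc.sub hc'), by omega⟩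

lemma one_le_abs_sub_of_two_le_abs_floor_sub {x y : ℝ} (h : 2 ≤ |⌊x⌋ - ⌊y⌋|) : 1 ≤ |x - y| := by
  contrapose! h
  rw [abs_lt] at h ⊢
  have hx := Int.floor_le x
  have hx' := Int.lt_floor_add_one x
  have hy := Int.floor_le y
  have hy' := Int.lt_floor_add_one y
  constructor
  · have : (-2 : ℝ) < ⌊x⌋ - ⌊y⌋ := by linarith
    exact_mod_cast this
  · have : (⌊x⌋ - ⌊y⌋ : ℝ) < 2 := by linarith
    exact_mod_cast this

lemma exists_separated_subset_card_image_floor_le (S : Finset ℝ) :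
    ∃ X ⊆ S, (X : Set ℝ).Pairwise (fun x y => 1 ≤ |x - y|) ∧
      #(S.image Int.floor) ≤ 2 * #X := by
  obtain ⟨E, hE, hsep, hcard⟩ := exists_subset_two_le_abs_sub (S.image Int.floor)
  obtain ⟨X, hXS, hXinj, rfl⟩ := exists_subset_injOn_image_eq_of_surjOn
    (f := (Int.floor : ℝ → ℤ)) S E (fun c hc => by simpa using hE hc)
  refine ⟨X, mod_cast hXS, fun x hx y hy hne => one_le_abs_sub_of_two_le_abs_floor_sub ?_, ?_⟩
  · exact hsep (mem_coe.2 (mem_image_of_mem _ hx)) (mem_coe.2 (mem_image_of_mem _ hy))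
      (hXinj.ne hx hy hne)
  · rwa [card_image_of_injOn hXinj] at hcard

lemma one_le_card_image_floor_mul_energy (t : ℝ) (n : ℕ) :
    1 ≤ #((levelPoints t n 1).image Int.floor) * (9 * energy t n) := by
  have hw : ∀ q ∈ zeroOneNat n ×ˢ zeroOneNat n, (0 : ℝ) ≤ (1 / 4) ^ n := fun _ _ => by positivity
  have hcauchy := sq_sum_le_card_image_floor_mul_collision hw fun q => 1 * (q.1 + t * q.2)
  rw [sum_weight_levelMeasure, one_pow] at hcauchy
  rw [levelPoints, image_image]
  refine hcauchy.trans (mul_le_mul_of_nonneg_left ?_ (by positivity))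
  refine (collision_mono hw _ (by norm_num : (1 : ℝ) ≤ 4 * 1)).trans ?_
  simpa only [energy, levelMeasure_eq_sum, div_one] using
    collision_le_smoothNorm_sq hw (fun q => 1 * (q.1 + t * q.2)) one_pos

lemma exists_separated_levelPoints (t : ℝ) (n : ℕ) :
    ∃ X ⊆ levelPoints t n 1, (X : Set ℝ).Pairwise (fun x y => 1 ≤ |x - y|) ∧
      1 ≤ 18 * #X * energy t n := by
  obtain ⟨X, hX, hsep, hcard⟩ := exists_separated_subset_card_image_floor_le (levelPoints t n 1)
  refine ⟨X, hX, hsep, (one_le_card_image_floor_mul_energy t n).trans ?_⟩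
  have hcard : (#((levelPoints t n 1).image Int.floor) : ℝ) ≤ 2 * #X := mod_cast hcard
  have henergy : 0 ≤ energy t n := sq_nonneg _
  calc _ ≤ 2 * #X * (9 * energy t n) := by gcongr
    _ = 18 * #X * energy t n := by ring

/-! ### Coding by blocks of digits -/

section Coding

variable {t : ℝ}

lemma exists_add_mul_four_pow_of_mem_zeroOneNat_succ {n a : ℕ} (ha : a ∈ zeroOneNat (n + 1)) :
    ∃ a' ∈ zeroOneNat n, ∃ e : ℕ, (e = 0 ∨ e = 1) ∧ a = a' + e * 4 ^ n := by
  simp only [zeroOneNat, mem_union, mem_image] at ha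
  rcases ha with ha | ⟨a', ha', rfl⟩
  · exact ⟨a, ha, 0, .inl rfl, by simp⟩
  · exact ⟨a', ha', 1, .inr rfl, by simp⟩

lemma exists_digits_of_mem_zeroOneNat (t : ℝ) {n : ℕ} :
    ∀ a ∈ zeroOneNat n, ∀ b ∈ zeroOneNat n, ∃ d : ℕ → ℝ, (∀ i, d i ∈ Omega t) ∧
      ∑ i ∈ range n, d i / 4 ^ (i + 1) = 3 * (a + t * b) / 4 ^ n := by
  induction n with
  | zero =>
    intro a ha b hb
    obtain rfl : a = 0 := by simpa [zeroOneNat] using ha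
    obtain rfl : b = 0 := by simpa [zeroOneNat] using hb
    exact ⟨fun _ => 0, fun _ => by simp [Omega], by simp⟩
  | succ n ih =>
    intro a ha b hb
    obtain ⟨a', ha', e, he, rfl⟩ := exists_add_mul_four_pow_of_mem_zeroOneNat_succ ha
    obtain ⟨b', hb', e', he', rfl⟩ := exists_add_mul_four_pow_of_mem_zeroOneNat_succ hb
    obtain ⟨d, hd, hsum⟩ := ih a' ha' b' hb'
    refine ⟨fun | 0 => 3 * (e + t * e') | i + 1 => d i, fun | 0 => ?_ | i + 1 => hd i, ?_⟩
    · rcases he with rfl | rfl <;> rcases he' with rfl | rfl <;> simp [Omega, mul_add, add_comm]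
    · have hshift : ∑ i ∈ range n, d i / (4 : ℝ) ^ (i + 1 + 1) = 3 * (a' + t * b') / 4 ^ n / 4 := by
        rw [← hsum, sum_div]
        exact sum_congr rfl fun i _ => by rw [pow_succ _ (i + 1), div_div]
      rw [sum_range_succ']
      change ∑ i ∈ range n, d i / (4 : ℝ) ^ (i + 1 + 1) + 3 * (e + t * e') / 4 ^ (0 + 1) = _
      rw [hshift]
      push_cast
      field_simp
      ring

lemma exists_digits_of_mem_levelPoints {n : ℕ} {x : ℝ} (hx : x ∈ levelPoints t n 1) :
    ∃ d : ℕ → ℝ, (∀ i, d i ∈ Omega t) ∧ ∑ i ∈ range n, d i / 4 ^ (i + 1) = 3 * x / 4 ^ n := by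
  obtain ⟨q, hq, rfl⟩ := mem_image.1 hx
  obtain ⟨ha, hb⟩ := mem_product.1 hq
  simpa only [one_mul] using exists_digits_of_mem_zeroOneNat t _ ha _ hb

lemma Omega_subset_Icc (ht₀ : 0 ≤ t) (ht₁ : t ≤ 1) : Omega t ⊆ Set.Icc 0 6 := by
  rintro x (rfl | rfl | rfl | rfl) <;> constructor <;> linarith

lemma hasSum_six_div_four_pow : HasSum (fun i : ℕ => (6 : ℝ) / 4 ^ (i + 1)) 2 := by
  have hgeom := (hasSum_geometric_of_lt_one (r := (1 / 4 : ℝ)) (by norm_num) (by norm_num)).mul_left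
    (6 / 4)
  convert! hgeom using 1
  · ext i
    rw [pow_succ, one_div, inv_pow]
    field_simp
  · norm_num

lemma summable_digits (ht₀ : 0 ≤ t) (ht₁ : t ≤ 1) {d : ℕ → ℝ} (hd : ∀ i, d i ∈ Omega t) :
    Summable fun i => d i / 4 ^ (i + 1) := by
  refine .of_nonneg_of_le (fun i => ?_) (fun i => ?_) hasSum_six_div_four_pow.summable
  · exact div_nonneg (Omega_subset_Icc ht₀ ht₁ (hd i)).1 (by positivity)
  · gcongr
    exact (Omega_subset_Icc ht₀ ht₁ (hd i)).2

lemma cornerC_subset_Icc (ht₀ : 0 ≤ t) (ht₁ : t ≤ 1) : cornerC t ⊆ Set.Icc 0 2 := by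
  rintro _ ⟨d, hd, rfl⟩
  refine ⟨tsum_nonneg fun i => ?_, hasSum_le (fun i => ?_) (summable_digits ht₀ ht₁ hd).hasSum
    hasSum_six_div_four_pow⟩
  · exact div_nonneg (Omega_subset_Icc ht₀ ht₁ (hd i)).1 (by positivity)
  · gcongr
    exact (Omega_subset_Icc ht₀ ht₁ (hd i)).2

/-- The number whose base-four digits are those of the length-`n` blocks `d (ω 0)`, `d (ω 1)`, …
written one after another; only the first `n` values of each `d i` matter. -/
noncomputable def blockSum {ι : Type*} (d : ι → ℕ → ℝ) (n : ℕ) (ω : ℕ → ι) : ℝ :=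
  ∑' k, d (ω (k / n)) (k % n) / 4 ^ (k + 1)

variable {ι : Type*} {d : ι → ℕ → ℝ}

lemma blockSum_mem_cornerC (hd : ∀ i k, d i k ∈ Omega t) (n : ℕ) (ω : ℕ → ι) :
    blockSum d n ω ∈ cornerC t :=
  ⟨_, fun _ => hd _ _, rfl⟩

lemma blockSum_eq_add_shift (ht₀ : 0 ≤ t) (ht₁ : t ≤ 1) (hd : ∀ i k, d i k ∈ Omega t) {n : ℕ}
    (hn : 0 < n) (ω : ℕ → ι) :
    blockSum d n ω = ∑ k ∈ range n, d (ω 0) k / 4 ^ (k + 1) +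
      blockSum d n (fun k => ω (k + 1)) / 4 ^ n := by
  rw [blockSum, ← (summable_digits ht₀ ht₁ fun k => hd (ω (k / n)) (k % n)).sum_add_tsum_nat_add n,
    blockSum, ← tsum_div_const]
  congr 1
  · refine sum_congr rfl fun k hk => ?_
    rw [Nat.div_eq_of_lt (mem_range.1 hk), Nat.mod_eq_of_lt (mem_range.1 hk)]
  · refine tsum_congr fun k => ?_
    rw [Nat.add_div_right _ hn, Nat.add_mod_right, div_div, ← pow_add, add_right_comm]

lemma inv_pow_le_abs_sub_of_eq_add_shift {z : (ℕ → ι) → ℝ} {u : ι → ℝ} {R a : ℝ} (hR : 0 < R)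
    (hz : ∀ ω, z ω ∈ Set.Icc 0 a) (hrec : ∀ ω, z ω = (u (ω 0) + z fun k => ω (k + 1)) / R)
    (hu : Pairwise fun i j => a + 1 ≤ |u i - u j|) {j : ℕ} :
    ∀ {ω ω' : ℕ → ι}, (∀ i < j, ω i = ω' i) → ω j ≠ ω' j → R⁻¹ ^ (j + 1) ≤ |z ω - z ω'| := by
  induction j with
  | zero =>
    intro ω ω' _ hne
    rw [hrec ω, hrec ω', ← sub_div, abs_div, abs_of_pos hR, zero_add, pow_one, inv_eq_one_div]
    gcongr
    obtain ⟨hz₀, hza⟩ := hz fun k => ω (k + 1)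
    obtain ⟨hz₀', hza'⟩ := hz fun k => ω' (k + 1)
    rcases le_abs.1 (hu hne) with h | h
    · exact le_abs.2 (.inl (by linarith))
    · exact le_abs.2 (.inr (by linarith))
  | succ j ih =>
    intro ω ω' heq hne
    have htail := ih (fun i hi => heq (i + 1) (by omega)) hne
    rw [hrec ω, hrec ω', heq 0 (by omega), ← sub_div, add_sub_add_left_eq_sub, abs_div,
      abs_of_pos hR, pow_succ, ← div_eq_mul_inv]
    gcongr

lemma exists_separated_coding (ht₀ : 0 ≤ t) (ht₁ : t ≤ 1) {n : ℕ} (hn : 0 < n) {X : Finset ℝ}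
    (hX : X ⊆ levelPoints t n 1) (hsep : (X : Set ℝ).Pairwise fun x y => 1 ≤ |x - y|) :
    ∃ z : (ℕ → Fin #X) → ℝ, Set.range z ⊆ cornerC t ∧
      ∀ ω ω', ω ≠ ω' → ((4 : ℝ) ^ n)⁻¹ ^ (PiNat.firstDiff ω ω' + 1) ≤ dist (z ω) (z ω') := by
  set x : Fin #X ≃ X := X.equivFin.symm
  choose d hd hsum using fun i => exists_digits_of_mem_levelPoints (hX (x i).2)
  have hmem := blockSum_mem_cornerC hd n
  refine ⟨blockSum d n, Set.range_subset_iff.2 hmem, fun ω ω' hne => ?_⟩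
  refine inv_pow_le_abs_sub_of_eq_add_shift (u := fun i => 3 * (x i : ℝ)) (a := 2) (by positivity)
    (fun ω => cornerC_subset_Icc ht₀ ht₁ (hmem ω)) (fun ω => ?_) (fun i j hij => ?_)
    (fun i hi => PiNat.apply_eq_of_lt_firstDiff hi) (PiNat.apply_firstDiff_ne hne)
  · rw [blockSum_eq_add_shift ht₀ ht₁ hd hn, hsum, add_div]
  · have hx : 1 ≤ |(x i : ℝ) - x j| :=
      hsep (x i).2 (x j).2 fun h => hij (x.injective (Subtype.ext h))
    calc (2 : ℝ) + 1 ≤ 3 * |(x i : ℝ) - x j| := by linarith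
      _ = |3 * (x i : ℝ) - 3 * x j| := by
        rw [← mul_sub, abs_mul, abs_of_pos (by norm_num : (0 : ℝ) < 3)]

end Coding

/-! ### Lower bounds for the dimension -/

section Dimension

variable {E : Type*} [MetricSpace E] {m : ℕ} {z : (ℕ → Fin m) → E} {ρ : ℝ} {r : NNReal}

lemma injective_of_pow_firstDiff_le_dist (hρ : 0 < ρ)
    (hz : ∀ ω ω', ω ≠ ω' → ρ ^ (PiNat.firstDiff ω ω' + 1) ≤ dist (z ω) (z ω')) :
    Function.Injective z := by
  intro ω ω' h
  by_contra hne
  exact dist_ne_zero.1 ((pow_pos hρ _).trans_le (hz ω ω' hne)).ne' h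

lemma dist_ofDigits_le_mul_dist_rpow (hρ : 0 < ρ) (hm : ρ⁻¹ ^ (r : ℝ) ≤ m)
    (hz : ∀ ω ω', ω ≠ ω' → ρ ^ (PiNat.firstDiff ω ω' + 1) ≤ dist (z ω) (z ω')) (ω ω' : ℕ → Fin m) :
    dist (Real.ofDigits ω) (Real.ofDigits ω') ≤ m * dist (z ω) (z ω') ^ (r : ℝ) := by
  have hm₀ : (0 : ℝ) < m := (Real.rpow_pos_of_pos (inv_pos.2 hρ) _).trans_le hm
  rcases eq_or_ne ω ω' with rfl | hne
  · rw [dist_self]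
    positivity
  set j := PiNat.firstDiff ω ω'
  have hmρ : (m : ℝ)⁻¹ ≤ ρ ^ (r : ℝ) := by
    rw [Real.inv_rpow hρ.le] at hm
    exact inv_le_of_inv_le₀ (by positivity) hm
  calc dist (Real.ofDigits ω) (Real.ofDigits ω')
      ≤ ((m : ℝ) ^ j)⁻¹ :=
        Real.abs_ofDigits_sub_ofDigits_le fun i hi => PiNat.apply_eq_of_lt_firstDiff hi
    _ = m * (m : ℝ)⁻¹ ^ (j + 1) := by
        rw [pow_succ, inv_pow]
        field_simp
    _ ≤ m * (ρ ^ (r : ℝ)) ^ (j + 1) := by gcongr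
    _ = m * (ρ ^ (j + 1)) ^ (r : ℝ) := by rw [← Real.rpow_pow_comm hρ.le]
    _ ≤ m * dist (z ω) (z ω') ^ (r : ℝ) := by
        gcongr
        exact hz ω ω' hne

-- Reading off base-`m` digits is a Hölder map of exponent `r` from the range of `z` onto `[0, 1]`.
lemma le_dimH_range_of_pow_firstDiff_le_dist (hρ : 0 < ρ) (hr : 0 < r) (hm₁ : 1 < m)
    (hm : ρ⁻¹ ^ (r : ℝ) ≤ m)
    (hz : ∀ ω ω', ω ≠ ω' → ρ ^ (PiNat.firstDiff ω ω' + 1) ≤ dist (z ω) (z ω')) :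
    (r : ENNReal) ≤ dimH (Set.range z) := by
  set φ : E → ℝ := Function.extend z Real.ofDigits 0
  have hφ (ω) : φ (z ω) = Real.ofDigits ω :=
    (injective_of_pow_firstDiff_le_dist hρ hz).extend_apply _ _ ω
  have hholder : HolderOnWith (m : NNReal) r φ (Set.range z) := by
    rintro _ ⟨ω, rfl⟩ _ ⟨ω', rfl⟩
    rw [hφ, hφ, edist_dist, edist_dist, ENNReal.ofReal_rpow_of_nonneg dist_nonneg r.coe_nonneg,
      ENNReal.coe_natCast, ← ENNReal.ofReal_natCast, ← ENNReal.ofReal_mul m.cast_nonneg]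
    exact ENNReal.ofReal_le_ofReal (dist_ofDigits_le_mul_dist_rpow hρ hm hz ω ω')
  have hcover : Set.Icc 0 1 ⊆ φ '' Set.range z := by
    intro x hx
    obtain ⟨ω, -, rfl⟩ := Real.ofDigits_SurjOn hm₁ hx
    exact ⟨z ω, ⟨ω, rfl⟩, hφ ω⟩
  have hunit : dimH (Set.Icc (0 : ℝ) 1) = 1 := by
    simpa using Real.dimH_of_nonempty_interior (E := ℝ) (s := Set.Icc 0 1) (by simp)
  have hdim : 1 ≤ dimH (Set.range z) / r :=
    hunit.symm.trans_le ((dimH_mono hcover).trans (hholder.dimH_image_le hr))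
  rwa [ENNReal.le_div_iff_mul_le (.inl (by simpa using hr.ne')) (.inl ENNReal.coe_ne_top),
    one_mul] at hdim

lemma EnergyDecay.exp_le_card {t β κ K : ℝ} (h : EnergyDecay t β K) {n N : ℕ}
    (hK : 18 * K ≤ Real.exp (κ * n)) (hN : 1 ≤ 18 * N * energy t n) :
    Real.exp ((β - κ) * n) ≤ N := by
  have hone : 1 ≤ N * Real.exp (-((β - κ) * n)) :=
    calc (1 : ℝ) ≤ 18 * N * energy t n := hN
      _ ≤ 18 * N * (K * Real.exp (-β * n)) := by gcongr; exact h.2 n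
      _ = N * (18 * K) * Real.exp (-β * n) := by ring
      _ ≤ N * Real.exp (κ * n) * Real.exp (-β * n) := by gcongr
      _ = N * Real.exp (-((β - κ) * n)) := by
        rw [mul_assoc, ← Real.exp_add]
        ring_nf
  rwa [Real.exp_neg, ← div_eq_mul_inv, one_le_div (Real.exp_pos _)] at hone

theorem le_dimH_cornerC {t : ℝ} (ht₀ : 0 ≤ t) (ht₁ : t ≤ 1) (ht : Irrational t) (hr : 0 < r)
    (hr₁ : r < 1) : (r : ENNReal) ≤ dimH (cornerC t) := by
  have hr₁ : (r : ℝ) < 1 := mod_cast hr₁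
  set κ : ℝ := Real.log 4 * (1 - r) / 2 with hκ
  have hκ_pos : 0 < κ := by
    have := Real.log_pos (by norm_num : (1 : ℝ) < 4)
    have := sub_pos.2 hr₁
    positivity
  obtain ⟨K, hdecay⟩ := energyDecay_of_irrational ht₀ ht₁ ht hκ_pos
  obtain ⟨n, hn, hK⟩ : ∃ n : ℕ, 0 < n ∧ 18 * K ≤ Real.exp (κ * n) :=
    ((eventually_gt_atTop 0).and <| (Real.tendsto_exp_atTop.comp <|
      tendsto_natCast_atTop_atTop.const_mul_atTop hκ_pos).eventually_ge_atTop (18 * K)).exists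
  obtain ⟨X, hX, hsep, hcard⟩ := exists_separated_levelPoints t n
  obtain ⟨z, hzC, hz⟩ := exists_separated_coding ht₀ ht₁ hn hX hsep
  have hXcard : ((4 : ℝ) ^ n)⁻¹⁻¹ ^ (r : ℝ) ≤ #X := by
    rw [inv_inv, Real.rpow_def_of_pos (by positivity), Real.log_pow]
    convert! hdecay.exp_le_card hK hcard using 2
    rw [hκ]
    ring
  have hone : 1 < ((4 : ℝ) ^ n)⁻¹⁻¹ ^ (r : ℝ) := by
    rw [inv_inv]
    exact Real.one_lt_rpow (one_lt_pow₀ (by norm_num) hn.ne') hr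
  exact (le_dimH_range_of_pow_firstDiff_le_dist (by positivity) hr (mod_cast hone.trans_le hXcard)
    hXcard hz).trans (dimH_mono hzC)

end Dimension

end CornerCantor

theorem dimH_eq_one_of_irrational (t : ℝ) (ht : t ∈ Set.Ioo (0:ℝ) 1)
    (hirr : Irrational t) :
    dimH (cornerC t) = 1 := by
  apply le_antisymm
  · calc dimH (cornerC t) ≤ dimH (Set.univ : Set ℝ) := dimH_mono (Set.subset_univ _)
      _ = 1 := by rw [Real.dimH_univ_eq_finrank, Module.finrank_self, Nat.cast_one]
  · refine ENNReal.le_of_forall_nnreal_lt fun r hr => ?_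
    rcases eq_zero_or_pos r with rfl | hr_pos
    · exact zero_le
    · exact CornerCantor.le_dimH_cornerC ht.1.le ht.2.le hirr hr_pos (mod_cast hr)
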